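/- Let d ≥ 3 and P = -div(G(x)∇) with G real symmetric, entries in C_b^∞(ℝ^d), satisfying Λ₊ ≥ G(x) ≥ Λ₋ > 0. Then for all χ ∈ C₀^∞(ℝ^d), all φ ∈ C₀^∞(ℝ), and all j = 1, …, d, the operator χ(x) R(j) φ(P) is compact on L²(ℝ^d), where R(j) = ∂_{x_j} P^{-1/2} is the j-th component of the Riesz transform. -/

import Mathlib

open MeasureTheory Filter Topology Complex
open scoped Real ENNReal FourierTransform ComplexConjugate

noncomputable section

/-- Euclidean space `ℝ^d`. -/
abbrev Ed (d : ℕ) : Type := EuclideanSpace ℝ (Fin d)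

/-- `L²(ℝ^d)` with complex values. -/
abbrev L2 (d : ℕ) := MeasureTheory.Lp ℂ 2 (volume : Measure (Ed d))

/-- The partial derivative `∂_j u`. -/
def pd (d : ℕ) (j : Fin d) (u : Ed d → ℂ) : Ed d → ℂ :=
  fun x => fderiv ℝ u x (EuclideanSpace.single j (1:ℝ))

/-- The operator `∑_{j,k} D_j (b_{jk} D_k) = - ∑_{j,k} ∂_j (b_{jk} ∂_k)` (complex
coefficients), applied to a function `u`. -/
def divGradC (d : ℕ) (b : Ed d → Fin d → Fin d → ℂ) (u : Ed d → ℂ) : Ed d → ℂ :=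
  fun x => -∑ j : Fin d, ∑ k : Fin d,
    fderiv ℝ (fun y => b y j k * fderiv ℝ u y (EuclideanSpace.single k (1:ℝ))) x
      (EuclideanSpace.single j (1:ℝ))

/-- `- div (G ∇ u) = ∑_{j,k} D_j (G_{jk} D_k) u` for a real coefficient matrix `G`. -/
def divGrad (d : ℕ) (G : Ed d → Fin d → Fin d → ℝ) (u : Ed d → ℂ) : Ed d → ℂ :=
  divGradC d (fun x j k => (G x j k : ℂ)) u

/-- The operation `a ↦ x·∇a` on real valued functions. -/
def xdotOp (d : ℕ) : (Ed d → ℝ) → Ed d → ℝ := fun a x => fderiv ℝ a x x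

/-- The operation `a ↦ x·∇a` on complex valued functions. -/
def xdotC (d : ℕ) : (Ed d → ℂ) → Ed d → ℂ := fun a x => fderiv ℝ a x x

/-- `a ∈ C_b^∞(ℝ^d)`: smooth with all derivatives bounded. -/
def CbSmooth (d : ℕ) (a : Ed d → ℝ) : Prop :=
  ContDiff ℝ (⊤ : ℕ∞) a ∧ ∀ n : ℕ, ∃ C : ℝ, ∀ x, ‖iteratedFDeriv ℝ n a x‖ ≤ C

/-- `a ∈ S_dil(ℝ^d)` : `a ∈ C_b^∞` and `(x·∇)^n a ∈ L^∞` for all `n`. -/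
def MemSdil (d : ℕ) (a : Ed d → ℝ) : Prop :=
  CbSmooth d a ∧ ∀ n : ℕ, ∃ C : ℝ, ∀ x, |(xdotOp d)^[n] a x| ≤ C

/-- Complex-valued version of `S_dil(ℝ^d)`. -/
def MemSdilC (d : ℕ) (a : Ed d → ℂ) : Prop :=
  (ContDiff ℝ (⊤ : ℕ∞) a ∧ ∀ n : ℕ, ∃ C : ℝ, ∀ x, ‖iteratedFDeriv ℝ n a x‖ ≤ C) ∧
  ∀ n : ℕ, ∃ C : ℝ, ∀ x, ‖(xdotC d)^[n] a x‖ ≤ C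

/-- The coefficient matrix is symmetric with real entries. -/
def SymmetricCoef (d : ℕ) (G : Ed d → Fin d → Fin d → ℝ) : Prop := ∀ x j k, G x j k = G x k j

/-- Uniform ellipticity: `Λ₊ ≥ G(x) ≥ Λ₋ > 0` as quadratic forms. -/
def UniformlyElliptic (d : ℕ) (G : Ed d → Fin d → Fin d → ℝ) : Prop :=
  ∃ lam Lam : ℝ, 0 < lam ∧ ∀ (x : Ed d) (v : Fin d → ℝ),
    lam * ∑ j, v j ^ 2 ≤ (∑ j, ∑ k, G x j k * v j * v k) ∧
      (∑ j, ∑ k, G x j k * v j * v k) ≤ Lam * ∑ j, v j ^ 2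

/-- The standing assumptions of the paper: `G` symmetric with entries in `C_b^∞`,
uniformly elliptic. -/
def Standing (d : ℕ) (G : Ed d → Fin d → Fin d → ℝ) : Prop :=
  (∀ j k, CbSmooth d fun x => G x j k) ∧ SymmetricCoef d G ∧ UniformlyElliptic d G

/-- `G = I_d + H`. -/
def Gmat (d : ℕ) (H : Ed d → Fin d → Fin d → ℝ) : Ed d → Fin d → Fin d → ℝ :=
  fun x j k => (if j = k then 1 else 0) + H x j k

/-- Long range condition `|∂^α (G - I_d)| ≤ C_α ⟨x⟩^{-μ-|α|}`. -/
def LongRange (d : ℕ) (G : Ed d → Fin d → Fin d → ℝ) (μ : ℝ) : Prop :=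
  ∀ (j k : Fin d) (n : ℕ), ∃ C : ℝ, ∀ x : Ed d,
    ‖iteratedFDeriv ℝ n (fun y => G y j k - if j = k then (1:ℝ) else 0) x‖
      ≤ C * ((1 + ‖x‖ ^ 2) ^ (-(μ + n) / 2) : ℝ)

/-- `R` is the resolvent `(P - z)⁻¹` of the self-adjoint realization of
`P = - div (G ∇·)`: for every `f ∈ L²`, `g = R f` solves `(P - z) g = f` in the sense
of distributions (this characterizes the resolvent uniquely). -/
def IsWeakResolvent (d : ℕ) (G : Ed d → Fin d → Fin d → ℝ) (z : ℂ)
    (R : L2 d →L[ℂ] L2 d) : Prop :=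
  ∀ (f : L2 d) (φ : SchwartzMap (Ed d) ℂ),
    (∫ x, (R f) x * divGrad d G (⇑φ) x) - z * (∫ x, (R f) x * φ x) = ∫ x, f x * φ x

/-- The japanese bracket weight `⟨x⟩^s = (1+|x|²)^{s/2}`. -/
def jweight (d : ℕ) (s : ℝ) : Ed d → ℝ := fun x => (1 + ‖x‖ ^ 2) ^ (s / 2)

/-- The dilation group `(e^{itA} u)(x) = e^{td/2} u(e^t x)`, where
`A = (x·∇ + ∇·x)/(2i)` is the generator of dilations. -/
def dil (d : ℕ) (t : ℝ) (u : Ed d → ℂ) : Ed d → ℂ :=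
  fun x => (Real.exp (t * d / 2) : ℂ) * u (Real.exp t • x)

/-- The `L²` inner product of two functions (conjugate linear in the first variable,
as is Mathlib's convention). -/
def pairL2 (d : ℕ) (u v : Ed d → ℂ) : ℂ := ∫ x : Ed d, (starRingEnd ℂ) (u x) * v x

/-- The resolvent `(hA - z)⁻¹ = (1/i) ∫₀^{±∞} e^{-itz} e^{ithA} dt` (`± Im z < 0`) of the
(rescaled) generator of dilations, realized by its defining integral formula. -/
def resDil (d : ℕ) (h : ℝ) (z : ℂ) (u : Ed d → ℂ) : Ed d → ℂ := fun x =>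
  if z.im < 0 then
    Complex.I⁻¹ * ∫ t in Set.Ici (0:ℝ), Complex.exp (-(Complex.I * t * z)) * dil d (t * h) u x
  else
    -Complex.I⁻¹ * ∫ t in Set.Iic (0:ℝ), Complex.exp (-(Complex.I * t * z)) * dil d (t * h) u x

/-- `sin(τ A) u = (e^{iτA} - e^{-iτA}) u / (2i)`. -/
def sinA (d : ℕ) (τ : ℝ) (u : Ed d → ℂ) : Ed d → ℂ :=
  fun x => (dil d τ u x - dil d (-τ) u x) / (2 * Complex.I)

/-- `F(hA) = arctan(hA)` realized through `arctan λ = ∫₀^∞ sin(tλ) e^{-t} dt / t`. -/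
def arctanA (d : ℕ) (h : ℝ) (u : Ed d → ℂ) : Ed d → ℂ :=
  fun x => ∫ t in Set.Ioi (0:ℝ), ((Real.exp (-t) / t : ℝ) : ℂ) * sinA d (t * h) u x

/-- Coefficients of the commutator `i[P,A] = ∑ D_j (2G_{jk} - x·∇G_{jk}) D_k`. -/
def commCoef (d : ℕ) (G : Ed d → Fin d → Fin d → ℝ) : Ed d → Fin d → Fin d → ℝ :=
  fun x j k => 2 * G x j k - xdotOp d (fun y => G y j k) x

/-- `P_τ = e^{-iτA} (i[P,A]) e^{iτA}` applied to a function. -/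
def ptauFun (d : ℕ) (G : Ed d → Fin d → Fin d → ℝ) (τ : ℝ) (u : Ed d → ℂ) : Ed d → ℂ :=
  dil d (-τ) (divGrad d (commCoef d G) (dil d τ u))

/-- Coefficients of `P_τ = e^{-iτA} (i[P,A]) e^{iτA}` for `P = -div((I+H)∇)`;
indeed `e^{-iτA} (∑ D_j b D_k) e^{iτA} = e^{2τ} ∑ D_j b(e^{-τ}x) D_k`. -/
def ptauCoef (d : ℕ) (H : Ed d → Fin d → Fin d → ℝ) (τ : ℝ) : Ed d → Fin d → Fin d → ℝ :=
  fun x j k => Real.exp (2 * τ) * commCoef d (Gmat d H) (Real.exp (-τ) • x) j k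

/-- Coefficients of `Q_s = ∫₀¹ (d P_τ / dτ)|_{τ=σs} dσ`. -/
def qCoef (d : ℕ) (H : Ed d → Fin d → Fin d → ℝ) (s : ℝ) : Ed d → Fin d → Fin d → ℝ :=
  fun x j k => ∫ σ in (0:ℝ)..(1:ℝ), deriv (fun τ => ptauCoef d H τ x j k) (σ * s)

/-- Coefficients of `B_τ = τ ∫₀¹ s Q_{sτ} ds`. -/
def bCoef (d : ℕ) (H : Ed d → Fin d → Fin d → ℝ) (τ : ℝ) : Ed d → Fin d → Fin d → ℝ :=
  fun x j k => τ * ∫ s in (0:ℝ)..(1:ℝ), s * qCoef d H (s * τ) x j k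

/-- The Fourier multiplier `|D|` (with symbol `|ξ|`). -/
def absD (d : ℕ) (u : Ed d → ℂ) : Ed d → ℂ :=
  fun x => 𝓕⁻ (fun ξ : Ed d => (‖ξ‖ : ℂ) * 𝓕 u ξ) x

/-- `‖ |D| w ‖_{L²}`, computed on the Fourier side (Plancherel). -/
def Dnorm (d : ℕ) (w : Ed d → ℂ) : ℝ :=
  (eLpNorm (fun ξ : Ed d => (‖ξ‖ : ℂ) * 𝓕 w ξ) 2 volume).toReal

/-- A general Fourier multiplier `ρ(D)`. -/
def multD (d : ℕ) (ρ : Ed d → ℂ) (u : Ed d → ℂ) : Ed d → ℂ :=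
  fun x => 𝓕⁻ (fun ξ : Ed d => ρ ξ * 𝓕 u ξ) x

/-- The operator `A = (x·∇ + ∇·x)/(2i) = (x·∇ + d/2)/i` applied to a function. -/
def opA (d : ℕ) (u : Ed d → ℂ) : Ed d → ℂ :=
  fun x => (fderiv ℝ u x x + (d / 2 : ℂ) * u x) / Complex.I

/-- The functions `F_ν(λ) = ∫₀^∞ sin(tλ) t/(t²+ν²) e^{-t} dt` approximating `arctan`. -/
def Fnu (ν lam : ℝ) : ℝ :=
  ∫ t in Set.Ioi (0:ℝ), Real.sin (t * lam) * (t / (t ^ 2 + ν ^ 2)) * Real.exp (-t)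

/-- `m`-admissible family in `S_dil(ℝ^d)`:
`‖∂_τ^k (x·∇)^n b_τ‖_{L^∞} ≤ C_{kn} e^{m|τ|}` for all `k, n`. -/
def AdmissibleCoeff (d : ℕ) (m : ℕ) (b : ℝ → Ed d → ℂ) : Prop :=
  (∀ τ, MemSdilC d (b τ)) ∧
  (∀ (n : ℕ) (x : Ed d), ContDiff ℝ (⊤ : ℕ∞) fun τ => (xdotC d)^[n] (b τ) x) ∧
  ∀ k n : ℕ, ∃ C : ℝ, ∀ (τ : ℝ) (x : Ed d),
    ‖iteratedDeriv k (fun σ => (xdotC d)^[n] (b σ) x) τ‖ ≤ C * Real.exp (m * |τ|)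

/-- `m`-admissible family of differential operators `B_τ = ∑ D_j b_{jk,τ} D_k`. -/
def AdmissibleOp (d : ℕ) (m : ℕ) (B : ℝ → Ed d → Fin d → Fin d → ℂ) : Prop :=
  ∀ j k, AdmissibleCoeff d m fun τ x => B τ x j k

/-- Functions that are continuous and bounded on `[0,∞)` (the spectrum of `P`). -/
def GoodSymbol (φ : ℝ → ℂ) : Prop :=
  Continuous φ ∧ ∃ C : ℝ, ∀ lam : ℝ, 0 ≤ lam → ‖φ lam‖ ≤ C

/-- The (continuous bounded) functional calculus `φ ↦ φ(P)` of the nonnegative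
self-adjoint operator `P = -div(G∇)`, characterized by: it is linear and
multiplicative on continuous functions bounded on `[0,∞) ⊇ spec(P)`, compatible with
sup-norm bounds and adjoints, only depends on the restriction of the symbol to
`[0,∞)`, and sends `λ ↦ (λ - z)⁻¹` to the resolvent `(P - z)⁻¹`.  These properties
determine `φ(P)` uniquely for every `φ` continuous and vanishing at infinity.
Moreover `0` is not an eigenvalue of `P` (field `ker_triv`). -/
structure SpectralCalc (d : ℕ) (G : Ed d → Fin d → Fin d → ℝ) where
  map : (ℝ → ℂ) → (L2 d →L[ℂ] L2 d)
  map_congr : ∀ φ ψ, GoodSymbol φ → GoodSymbol ψ →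
    (∀ lam : ℝ, 0 ≤ lam → φ lam = ψ lam) → map φ = map ψ
  map_add : ∀ φ ψ, GoodSymbol φ → GoodSymbol ψ →
    map (fun lam => φ lam + ψ lam) = map φ + map ψ
  map_smul : ∀ (c : ℂ) φ, GoodSymbol φ → map (fun lam => c * φ lam) = c • map φ
  map_mul : ∀ φ ψ, GoodSymbol φ → GoodSymbol ψ →
    map (fun lam => φ lam * ψ lam) = (map φ).comp (map ψ)
  map_norm : ∀ (φ) (C : ℝ), (∀ lam : ℝ, 0 ≤ lam → ‖φ lam‖ ≤ C) → ‖map φ‖ ≤ C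
  map_star : ∀ φ, GoodSymbol φ →
    ContinuousLinearMap.adjoint (map φ) = map (fun lam => (starRingEnd ℂ) (φ lam))
  map_resolvent : ∀ z : ℂ, z.im ≠ 0 →
    IsWeakResolvent d G z (map fun lam => ((lam : ℂ) - z)⁻¹)
  ker_triv : ∀ f : L2 d,
    (∀ φ : SchwartzMap (Ed d) ℂ, (∫ x, f x * divGrad d G (⇑φ) x) = 0) → f = 0

/-- `Rj = ∂_j P^{-1/2}` is the `j`-th Riesz transform of `P`, defined as the strong
limit `s-lim_n π^{-1/2} ∂_j ∫_{1/n}^n e^{-tP} dt/√t`; here `gn n` is the vector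
integral `∫_{1/n}^n e^{-tP} f dt/√t` and `wn n` is its distributional `∂_j`
derivative. -/
def RieszOf (d : ℕ) (G : Ed d → Fin d → Fin d → ℝ) (S : SpectralCalc d G) (j : Fin d)
    (Rj : L2 d →L[ℂ] L2 d) : Prop :=
  ∀ (f : L2 d) (gn wn : ℕ → L2 d),
    (∀ n : ℕ, gn n = ∫ t in Set.Icc ((n : ℝ)⁻¹) (n : ℝ),
        ((Real.sqrt t)⁻¹ : ℝ) • (S.map (fun lam => Complex.exp (-(t : ℂ) * ((max lam 0 : ℝ) : ℂ))) f)) →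
    (∀ (n : ℕ) (φ : SchwartzMap (Ed d) ℂ),
        (∫ x, (wn n) x * φ x) = -∫ x, (gn n) x * pd d j (⇑φ) x) →
    Tendsto (fun n : ℕ => ((Real.sqrt Real.pi)⁻¹ : ℝ) • wn n) atTop (𝓝 (Rj f))

/-! The operator `P` controls two derivatives: `∑_l ‖∂_l ∂_j u‖ ≤ c (‖P u‖ + √⟨u, P u⟩)` for
Schwartz functions `u`, and `(1 + P) 𝓢` is dense in `L²` (method of continuity starting from
`1 - Δ`), so the estimate extends to the domain of `P`. The truncated integrals
`g_n = ∫_{1/n}^n e^{-tP} φ(P) f dt/√t` lie in this domain and, since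
`λ |∫_{1/n}^n e^{-tλ} dt/√t|² ≤ π`, the right-hand side for `u = g_n` is `O(‖f‖)` uniformly in `n`.
Hence the part of `R(j) φ(P)` at frequencies larger than `R` has norm `O(1/R)`, whereas `χ` composed
with a compactly supported Fourier multiplier is compact, and `χ R(j) φ(P)` is a norm limit of
compact operators. -/

open scoped SchwartzMap BoundedContinuousFunction

section DenseRange

variable {𝕜 E F : Type*} [NormedField 𝕜] [AddCommGroup E] [Module 𝕜 E]
  [NormedAddCommGroup F] [NormedSpace 𝕜 F]

theorem denseRange_of_norm_sub_le {L L' : E →ₗ[𝕜] F} {ε : ℝ} (hε : ε < 1) (hL : DenseRange L)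
    (h : ∀ u, ‖L u - L' u‖ ≤ ε * ‖L u‖) : DenseRange L' := by
  set M := (LinearMap.range L').topologicalClosure with hM
  suffices hMtop : ∀ x, x ∈ M by
    intro x
    simpa only [hM, ← SetLike.mem_coe, Submodule.topologicalClosure_coe,
      LinearMap.coe_range] using hMtop x
  by_contra hx
  push Not at hx
  obtain ⟨r, hεr, hr⟩ := exists_between hε
  obtain ⟨y, hyM, hy⟩ := riesz_lemma (LinearMap.range L').isClosed_topologicalClosure hx hr
  have hy_pos : 0 < ‖y‖ := norm_pos_iff.2 fun h0 => hyM (h0 ▸ M.zero_mem)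
  have key : ∀ z, r * ‖y‖ ≤ ‖y - z‖ + ε * ‖z‖ := fun z => by
    induction z using hL.induction_on with
    | hp => exact isClosed_le continuous_const (by fun_prop)
    | ih u =>
      have hu : L' u ∈ M := Submodule.le_topologicalClosure _ (LinearMap.mem_range_self L' u)
      calc r * ‖y‖ ≤ ‖y - L' u‖ := hy _ hu
        _ ≤ ‖y - L u‖ + ‖L u - L' u‖ := norm_sub_le_norm_sub_add_norm_sub _ _ _
        _ ≤ ‖y - L u‖ + ε * ‖L u‖ := by gcongr; exact h u
  have := key y
  rw [sub_self, norm_zero, zero_add] at this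
  exact hεr.not_ge (le_of_mul_le_mul_right this hy_pos)

/-- The method of continuity, in a form that only asks for dense ranges. -/
theorem denseRange_of_lipschitz_path {L : ℝ → E →ₗ[𝕜] F} {C : ℝ}
    (hC : ∀ s ∈ Set.Icc (0 : ℝ) 1, ∀ t ∈ Set.Icc (0 : ℝ) 1, ∀ u,
      ‖L s u - L t u‖ ≤ C * |s - t| * ‖L s u‖) (h0 : DenseRange (L 0)) : DenseRange (L 1) := by
  obtain ⟨N, hN⟩ := exists_nat_gt (max C 0)
  have hNpos : (0 : ℝ) < N := (le_max_right _ _).trans_lt hN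
  suffices h : ∀ n : ℕ, n ≤ N → DenseRange (L (n / N)) by
    simpa [div_self hNpos.ne'] using h N le_rfl
  intro n
  induction n with
  | zero => simpa using h0
  | succ n ih =>
    intro hn
    have mem : ∀ m : ℕ, m ≤ N → (m / N : ℝ) ∈ Set.Icc (0 : ℝ) 1 := fun m hm =>
      ⟨by positivity, div_le_one_of_le₀ (by exact_mod_cast hm) hNpos.le⟩
    have hstep : |(n / N : ℝ) - ((n + 1 : ℕ) / N : ℝ)| = 1 / N := by
      rw [← sub_div, abs_div, abs_of_pos hNpos]
      simp
    refine denseRange_of_norm_sub_le (ε := C * (1 / N)) ?_ (ih (by omega)) fun u => ?_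
    · rw [mul_one_div, div_lt_one hNpos]
      exact (le_max_left _ _).trans_lt hN
    · simpa only [hstep] using hC _ (mem n (by omega)) _ (mem (n + 1) hn) u

end DenseRange

section KernelOperator

variable {α 𝕜 H : Type*} [MeasurableSpace α] {μ : Measure α} {p : ℝ≥0∞} [Fact (1 ≤ p)]
  [RCLike 𝕜] [NormedAddCommGroup H] [NormedSpace 𝕜 H]

variable (𝕜 H p μ) in
/-- The operator `h ↦ (x ↦ F x h)` with values in `Lᵖ` attached to an `Lᵖ` family `F` of
functionals. For `p = 2` these are the operators of Hilbert–Schmidt type. -/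
def kernelOperator : Lp (H →L[𝕜] 𝕜) p μ →L[𝕜] H →L[𝕜] Lp 𝕜 p μ :=
  ((ContinuousLinearMap.apply 𝕜 𝕜).compLpL₂ p μ).flip

theorem kernelOperator_apply_ae (F : Lp (H →L[𝕜] 𝕜) p μ) (h : H) :
    kernelOperator 𝕜 H μ p F h =ᵐ[μ] fun x => F x h :=
  (ContinuousLinearMap.apply 𝕜 𝕜 h).coeFn_compLp F

theorem isCompactOperator_kernelOperator (hp : p ≠ ∞) (F : Lp (H →L[𝕜] 𝕜) p μ) :
    IsCompactOperator (kernelOperator 𝕜 H μ p F) := by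
  induction F using Lp.induction hp with
  | @indicatorConst c s hs hμs =>
    have hrank : kernelOperator 𝕜 H μ p (Lp.simpleFunc.indicatorConst p hs hμs.ne c) =
        (ContinuousLinearMap.toSpanSingleton 𝕜 (indicatorConstLp p hs hμs.ne (1 : 𝕜))) ∘L c := by
      ext1 h
      refine Lp.ext ?_
      rw [Lp.simpleFunc.coe_indicatorConst, ContinuousLinearMap.comp_apply,
        ContinuousLinearMap.toSpanSingleton_apply]
      filter_upwards [kernelOperator_apply_ae (indicatorConstLp p hs hμs.ne c) h,
        indicatorConstLp_coeFn (p := p) (hs := hs) (hμs := hμs.ne) (c := c),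
        indicatorConstLp_coeFn (p := p) (hs := hs) (hμs := hμs.ne) (c := (1 : 𝕜)),
        Lp.coeFn_smul (c h) (indicatorConstLp p hs hμs.ne (1 : 𝕜))] with x h0 h1 h2 h3
      rw [h0, h1, h3, Pi.smul_apply, h2]
      by_cases hx : x ∈ s <;> simp [hx]
    have hc : IsCompactOperator c :=
      (isCompactOperator_id_iff_locallyCompactSpace.2 inferInstance :
        IsCompactOperator (id : 𝕜 → 𝕜)).comp_clm c
    rw [hrank]
    exact hc.clm_comp
      (ContinuousLinearMap.toSpanSingleton 𝕜 (indicatorConstLp p hs hμs.ne (1 : 𝕜)))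
  | add _ _ _ hf hg => rw [map_add]; exact hf.add hg
  | isClosed =>
    exact isClosed_setOfPred_isCompactOperator.preimage (kernelOperator 𝕜 H μ p).continuous

end KernelOperator

section Lp

variable {α ι : Type*} [MeasurableSpace α] {μ : Measure α} {p : ℝ≥0∞}

theorem Lp_norm_le_mul_sum_norm {E F : Type*} [NormedAddCommGroup E] [NormedAddCommGroup F]
    [Fact (1 ≤ p)] (s : Finset ι) {c : ℝ} (hc : 0 ≤ c) (f : Lp E p μ) (g : ι → Lp F p μ)
    (h : ∀ᵐ x ∂μ, ‖f x‖ ≤ c * ∑ i ∈ s, ‖g i x‖) : ‖f‖ ≤ c * ∑ i ∈ s, ‖g i‖ := by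
  let N : ι → Lp ℝ p μ := fun i => (Lp.memLp (g i)).norm.toLp
  have hN : ∀ᵐ x ∂μ, ∀ i ∈ s, N i x = ‖g i x‖ :=
    (ae_ball_iff s.countable_toSet).2 fun i _ => (Lp.memLp (g i)).norm.coeFn_toLp
  have hNnorm : ∀ i, ‖N i‖ = ‖g i‖ := fun i => by
    rw [Lp.norm_toLp, eLpNorm_norm, Lp.norm_def]
  calc ‖f‖ ≤ c * ‖∑ i ∈ s, N i‖ := by
        refine Lp.norm_le_mul_norm_of_ae_le_mul ?_
        filter_upwards [h, hN, Lp.coeFn_finsetSum s N] with x hx hNx hsum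
        rw [hsum, Finset.sum_apply, Finset.sum_congr rfl hNx]
        exact hx.trans (mul_le_mul_of_nonneg_left (le_abs_self _) hc)
    _ ≤ c * ∑ i ∈ s, ‖g i‖ := by
        simp only [← hNnorm]
        gcongr
        exact norm_sum_le _ _

variable [TopologicalSpace α] [OpensMeasurableSpace α] [IsFiniteMeasureOnCompacts μ]

theorem exists_mul_clm_of_hasCompactSupport {𝕜 : Type*} [RCLike 𝕜] [Fact (1 ≤ p)] {χ : α → 𝕜}
    (hχ : Continuous χ) (hχc : HasCompactSupport χ) :
    ∃ X : Lp 𝕜 p μ →L[𝕜] Lp 𝕜 p μ, ∀ f, X f =ᵐ[μ] fun x => χ x * f x := by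
  have hχ_mem : MemLp χ ∞ μ := hχ.memLp_of_hasCompactSupport hχc
  refine ⟨(ContinuousLinearMap.mul 𝕜 𝕜).holderL μ ∞ p p hχ_mem.toLp, fun f => ?_⟩
  filter_upwards [(ContinuousLinearMap.mul 𝕜 𝕜).coeFn_holder (r := p) hχ_mem.toLp f,
    hχ_mem.coeFn_toLp] with x hmul hx
  rw [ContinuousLinearMap.holderL_apply_apply, hmul, hx, ContinuousLinearMap.mul_apply']

theorem exists_compact_clm_mul_inner {H : Type*} {𝕜 : Type*} [RCLike 𝕜] [NormedAddCommGroup H]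
    [InnerProductSpace 𝕜 H]
    [SecondCountableTopology α] [Fact (1 ≤ p)] (hp : p ≠ ∞) {χ : α → 𝕜}
    (hχ : Continuous χ) (hχc : HasCompactSupport χ) {k : α → H} (hk : Continuous k) :
    ∃ A : H →L[𝕜] Lp 𝕜 p μ, IsCompactOperator A ∧
      ∀ h, A h =ᵐ[μ] fun x => χ x * inner 𝕜 (k x) h := by
  let F : α → H →L[𝕜] 𝕜 := fun x => χ x • innerSL 𝕜 (k x)
  have hFcont : Continuous F := hχ.smul ((innerSL 𝕜).continuous.comp hk)
  have hFc : HasCompactSupport F := hχc.mono fun x hx h0 => hx <| by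
    change χ x • innerSL 𝕜 (k x) = 0
    rw [h0]
    exact zero_smul 𝕜 (innerSL 𝕜 (k x))
  have hF : MemLp F p μ := hFcont.memLp_of_hasCompactSupport hFc
  refine ⟨kernelOperator 𝕜 H μ p hF.toLp, isCompactOperator_kernelOperator hp _, fun h => ?_⟩
  filter_upwards [kernelOperator_apply_ae hF.toLp h, hF.coeFn_toLp] with x hx hFx
  rw [hx, hFx]
  rfl

end Lp

section SchwartzCalculus

variable {d : ℕ}

/-- The partial derivative `∂_j` on Schwartz functions. -/
def pdCLM (j : Fin d) : 𝓢(Ed d, ℂ) →L[ℂ] 𝓢(Ed d, ℂ) :=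
  LineDeriv.lineDerivOpCLM ℂ 𝓢(Ed d, ℂ) (EuclideanSpace.single j (1 : ℝ))

/-- The embedding of Schwartz functions into `L²`. -/
def toL2 : 𝓢(Ed d, ℂ) →L[ℂ] L2 d := SchwartzMap.toLpCLM ℂ ℂ 2 volume

/-- Multiplication of Schwartz functions by a real function `a`; zero (a junk value) unless `a`
has temperate growth. -/
def mulCLM (a : Ed d → ℝ) : 𝓢(Ed d, ℂ) →L[ℂ] 𝓢(Ed d, ℂ) :=
  SchwartzMap.smulLeftCLM ℂ fun x => (a x : ℂ)

/-- Complex conjugation of Schwartz functions. -/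
def conjCLM : 𝓢(Ed d, ℂ) →L[ℝ] 𝓢(Ed d, ℂ) :=
  SchwartzMap.postcompCLM (𝕜 := ℝ) (Complex.conjCLE : ℂ →L[ℝ] ℂ)

/-- The operator `-div (A ∇·)` on Schwartz functions. -/
def divGradCLM (A : Ed d → Fin d → Fin d → ℝ) : 𝓢(Ed d, ℂ) →L[ℂ] 𝓢(Ed d, ℂ) :=
  -∑ j, ∑ k, pdCLM j ∘L mulCLM (fun x => A x j k) ∘L pdCLM k

/-- The operator `1 - div (A ∇·)` from Schwartz functions to `L²`. -/
def oneAddDivGrad (A : Ed d → Fin d → Fin d → ℝ) : 𝓢(Ed d, ℂ) →L[ℂ] L2 d :=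
  toL2 ∘L (ContinuousLinearMap.id ℂ _ + divGradCLM A)

theorem pdCLM_apply (j : Fin d) (u : 𝓢(Ed d, ℂ)) (x : Ed d) : pdCLM j u x = pd d j u x := rfl

theorem toL2_ae (u : 𝓢(Ed d, ℂ)) : toL2 u =ᵐ[volume] u := SchwartzMap.coeFn_toLp u 2 volume

theorem mulCLM_apply {a : Ed d → ℝ} (ha : a.HasTemperateGrowth) (u : 𝓢(Ed d, ℂ)) (x : Ed d) :
    mulCLM a u x = a x * u x := by
  have ha' : (fun x => (a x : ℂ)).HasTemperateGrowth := by fun_prop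
  rw [mulCLM, SchwartzMap.smulLeftCLM_apply_apply ha', smul_eq_mul]

theorem conjCLM_apply (u : 𝓢(Ed d, ℂ)) (x : Ed d) : conjCLM u x = conj (u x) := rfl

theorem divGradCLM_eq_sum (A : Ed d → Fin d → Fin d → ℝ) (u : 𝓢(Ed d, ℂ)) :
    divGradCLM A u = -∑ j, ∑ k, pdCLM j (mulCLM (fun x => A x j k) (pdCLM k u)) := by
  simp only [divGradCLM, neg_apply, sum_apply, ContinuousLinearMap.comp_apply]

theorem divGradCLM_apply {A : Ed d → Fin d → Fin d → ℝ}
    (hA : ∀ j k, (fun x => A x j k).HasTemperateGrowth) (u : 𝓢(Ed d, ℂ)) (x : Ed d) :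
    divGradCLM A u x = divGrad d A u x := by
  have hmul : ∀ j k, ⇑(mulCLM (fun x => A x j k) (pdCLM k u)) =
      fun y => (A y j k : ℂ) * fderiv ℝ u y (EuclideanSpace.single k 1) :=
    fun j k => funext fun y => mulCLM_apply (hA j k) _ y
  simp only [divGradCLM_eq_sum, neg_apply, sum_apply, pdCLM_apply, divGrad, divGradC, pd, hmul]

theorem oneAddDivGrad_apply (A : Ed d → Fin d → Fin d → ℝ) (u : 𝓢(Ed d, ℂ)) :
    oneAddDivGrad A u = toL2 u + toL2 (divGradCLM A u) := map_add toL2 _ _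

theorem pdCLM_comm (j k : Fin d) (u : 𝓢(Ed d, ℂ)) :
    pdCLM j (pdCLM k u) = pdCLM k (pdCLM j u) := by
  ext x
  have hu : ContDiff ℝ 2 u := u.smooth 2
  have hpd : ∀ i l, pdCLM i (pdCLM l u) x = fderiv ℝ (fderiv ℝ u) x
      (EuclideanSpace.single i 1) (EuclideanSpace.single l 1) := fun i l => by
    have hdiff : DifferentiableAt ℝ (fderiv ℝ u) x :=
      (hu.fderiv_right (m := 1) le_rfl).differentiable one_ne_zero x
    change fderiv ℝ (fun y => fderiv ℝ u y (EuclideanSpace.single l 1)) x _ = _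
    rw [fderiv_clm_apply hdiff (differentiableAt_const _)]
    simp
  rw [hpd, hpd]
  exact (hu.contDiffAt.isSymmSndFDerivAt (by simp)) _ _

theorem inner_toL2 (f : L2 d) (v : 𝓢(Ed d, ℂ)) :
    inner ℂ (toL2 v) f = ∫ x, f x * conj (v x) := by
  rw [L2.inner_def]
  refine integral_congr_ae ?_
  filter_upwards [toL2_ae v] with x hx
  rw [hx, RCLike.inner_apply]

theorem inner_toL2_toL2 (u v : 𝓢(Ed d, ℂ)) :
    inner ℂ (toL2 u) (toL2 v) = ∫ x, conj (u x) * v x := by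
  rw [inner_toL2]
  refine integral_congr_ae ?_
  filter_upwards [toL2_ae v] with x hx
  rw [hx, mul_comm]

theorem inner_toL2_pdCLM (j : Fin d) (u v : 𝓢(Ed d, ℂ)) :
    inner ℂ (toL2 u) (toL2 (pdCLM j v)) = -inner ℂ (toL2 (pdCLM j u)) (toL2 v) := by
  rw [inner_toL2_toL2, inner_toL2_toL2]
  exact SchwartzMap.integral_bilinear_lineDerivOp_right_eq_neg_left u v
    ((ContinuousLinearMap.mul ℝ ℂ).comp (Complex.conjCLE : ℂ →L[ℝ] ℂ)) (EuclideanSpace.single j 1)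

theorem hasTemperateGrowth_fderiv {E F : Type*} [NormedAddCommGroup E] [NormedSpace ℝ E]
    [NormedAddCommGroup F] [NormedSpace ℝ F] {f : E → F} (hf : f.HasTemperateGrowth) :
    (fderiv ℝ f).HasTemperateGrowth := by
  refine ⟨hf.1.fderiv_right (by simp), fun n => ?_⟩
  obtain ⟨k, C, hC⟩ := hf.2 (n + 1)
  exact ⟨k, C, fun x => by rw [norm_iteratedFDeriv_fderiv]; exact hC x⟩

theorem hasTemperateGrowth_fderiv_apply {E F : Type*} [NormedAddCommGroup E] [NormedSpace ℝ E]
    [NormedAddCommGroup F] [NormedSpace ℝ F] {f : E → F} (hf : f.HasTemperateGrowth) (v : E) :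
    (fun x => fderiv ℝ f x v).HasTemperateGrowth :=
  (ContinuousLinearMap.apply ℝ F v).hasTemperateGrowth.comp (hasTemperateGrowth_fderiv hf)

theorem pdCLM_mulCLM {a : Ed d → ℝ} (ha : a.HasTemperateGrowth) (l : Fin d) (u : 𝓢(Ed d, ℂ)) :
    pdCLM l (mulCLM a u) = mulCLM a (pdCLM l u) +
      mulCLM (fun x => fderiv ℝ a x (EuclideanSpace.single l 1)) u := by
  ext x
  have hau : (mulCLM a u : Ed d → ℂ) = fun x => a x • u x := by
    ext x
    rw [mulCLM_apply ha, Complex.real_smul]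
  rw [add_apply, mulCLM_apply ha, mulCLM_apply (hasTemperateGrowth_fderiv_apply ha _),
    pdCLM_apply, pdCLM_apply, pd, pd, hau,
    fderiv_fun_smul (ha.1.differentiable (by simp) x) u.differentiableAt]
  simp

theorem norm_toL2_mulCLM_le {a : Ed d → ℝ} (ha : a.HasTemperateGrowth) {M : ℝ}
    (hM : ∀ x, |a x| ≤ M) (u : 𝓢(Ed d, ℂ)) : ‖toL2 (mulCLM a u)‖ ≤ M * ‖toL2 u‖ := by
  refine Lp.norm_le_mul_norm_of_ae_le_mul ?_
  filter_upwards [toL2_ae u, toL2_ae (mulCLM a u)] with x hu hau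
  rw [hu, hau, mulCLM_apply ha, norm_mul, Complex.norm_real]
  gcongr
  exact hM x

theorem pdCLM_conjCLM (j : Fin d) (u : 𝓢(Ed d, ℂ)) :
    pdCLM j (conjCLM u) = conjCLM (pdCLM j u) := by
  ext x
  have hu : HasFDerivAt u (fderiv ℝ u x) x := u.differentiableAt.hasFDerivAt
  exact congrArg (· (EuclideanSpace.single j 1))
    ((Complex.conjCLE : ℂ →L[ℝ] ℂ).hasFDerivAt.comp x hu).fderiv

theorem mulCLM_conjCLM {a : Ed d → ℝ} (ha : a.HasTemperateGrowth) (u : 𝓢(Ed d, ℂ)) :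
    mulCLM a (conjCLM u) = conjCLM (mulCLM a u) := by
  ext x
  simp only [mulCLM_apply ha, conjCLM_apply, map_mul, Complex.conj_ofReal]

theorem divGradCLM_conjCLM {A : Ed d → Fin d → Fin d → ℝ}
    (hA : ∀ j k, (fun x => A x j k).HasTemperateGrowth) (u : 𝓢(Ed d, ℂ)) :
    divGradCLM A (conjCLM u) = conjCLM (divGradCLM A u) := by
  simp only [divGradCLM_eq_sum, map_neg, map_sum, pdCLM_conjCLM, mulCLM_conjCLM (hA _ _)]

end SchwartzCalculus

section Ellipticity

variable {d : ℕ} {A B : Ed d → Fin d → Fin d → ℝ} {lam M : ℝ}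

/-- `A` is a matrix of coefficients of temperate growth whose entries and their first derivatives
are bounded by `M`, and whose quadratic form is bounded below by `lam > 0`. Keeping the constants
explicit makes the resulting estimates uniform along the segment from `1` to `A`. -/
structure EllipticCoeff (A : Ed d → Fin d → Fin d → ℝ) (lam M : ℝ) : Prop where
  pos : 0 < lam
  temperate : ∀ j k, (fun x => A x j k).HasTemperateGrowth
  abs_le : ∀ x j k, |A x j k| ≤ M
  abs_fderiv_le : ∀ x j k l, |fderiv ℝ (fun y => A y j k) x (EuclideanSpace.single l 1)| ≤ M
  elliptic : ∀ (x : Ed d) (v : Fin d → ℝ), lam * ∑ j, v j ^ 2 ≤ ∑ j, ∑ k, A x j k * v j * v k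

namespace EllipticCoeff

theorem bound_nonneg (hA : EllipticCoeff A lam M) (j : Fin d) : 0 ≤ M :=
  (abs_nonneg _).trans (hA.abs_le 0 j j)

theorem mono (hA : EllipticCoeff A lam M) {lam' M' : ℝ} (hpos : 0 < lam') (hlam : lam' ≤ lam)
    (hM : M ≤ M') : EllipticCoeff A lam' M' where
  pos := hpos
  temperate := hA.temperate
  abs_le x j k := (hA.abs_le x j k).trans hM
  abs_fderiv_le x j k l := (hA.abs_fderiv_le x j k l).trans hM
  elliptic x v := (by gcongr : _ ≤ _).trans (hA.elliptic x v)

theorem one (d : ℕ) :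
    EllipticCoeff (fun (_ : Ed d) j k => (1 : Matrix (Fin d) (Fin d) ℝ) j k) 1 1 where
  pos := one_pos
  temperate j k := by fun_prop
  abs_le _ j k := by rw [Matrix.one_apply]; split_ifs <;> simp
  abs_fderiv_le := by simp
  elliptic := by simp [Matrix.one_apply, sq]

theorem convexCombination (hA : EllipticCoeff A lam M) (hB : EllipticCoeff B lam M) {s t : ℝ}
    (hs : 0 ≤ s) (ht : 0 ≤ t) (hst : s + t = 1) : EllipticCoeff (s • A + t • B) lam M where
  pos := hA.pos
  temperate j k := by
    have := hA.temperate j k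
    have := hB.temperate j k
    simp only [Pi.add_apply, Pi.smul_apply, smul_eq_mul]
    fun_prop
  abs_le x j k := _root_.abs_le.2 <| convex_Icc (-M) M
    (_root_.abs_le.1 (hA.abs_le x j k)) (_root_.abs_le.1 (hB.abs_le x j k)) hs ht hst
  abs_fderiv_le x j k l := by
    have hderiv : fderiv ℝ (fun y => s * A y j k + t * B y j k) x (EuclideanSpace.single l 1) =
        s * fderiv ℝ (fun y => A y j k) x (EuclideanSpace.single l 1) +
          t * fderiv ℝ (fun y => B y j k) x (EuclideanSpace.single l 1) := by
      have hAd : DifferentiableAt ℝ (fun y => A y j k) x :=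
        (hA.temperate j k).1.differentiable (by simp) x
      have hBd : DifferentiableAt ℝ (fun y => B y j k) x :=
        (hB.temperate j k).1.differentiable (by simp) x
      rw [fderiv_fun_add (hAd.const_mul s) (hBd.const_mul t), fderiv_const_mul hAd,
        fderiv_const_mul hBd]
      rfl
    change |fderiv ℝ (fun y => s * A y j k + t * B y j k) x (EuclideanSpace.single l 1)| ≤ M
    rw [hderiv]
    exact _root_.abs_le.2 <| convex_Icc (-M) M
      (_root_.abs_le.1 (hA.abs_fderiv_le x j k l)) (_root_.abs_le.1 (hB.abs_fderiv_le x j k l))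
      hs ht hst
  elliptic x v :=
    calc lam * ∑ j, v j ^ 2
        = s * (lam * ∑ j, v j ^ 2) + t * (lam * ∑ j, v j ^ 2) := by rw [← add_mul, hst, one_mul]
      _ ≤ s * (∑ j, ∑ k, A x j k * v j * v k) + t * ∑ j, ∑ k, B x j k * v j * v k := by
          gcongr; exacts [hA.elliptic x v, hB.elliptic x v]
      _ = _ := by
          simp only [Finset.mul_sum, ← Finset.sum_add_distrib, Pi.add_apply, Pi.smul_apply,
            smul_eq_mul]
          congr! 2 with j _ k _
          ring

theorem elliptic_complex (hA : EllipticCoeff A lam M) (x : Ed d) (v : Fin d → ℂ) :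
    lam * ∑ j, ‖v j‖ ^ 2 ≤ ∑ j, ∑ k, (inner ℂ (v j) (A x j k * v k)).re := by
  have hnorm : ∑ j, ‖v j‖ ^ 2 = ∑ j, (v j).re ^ 2 + ∑ j, (v j).im ^ 2 := by
    simp only [← Finset.sum_add_distrib, Complex.sq_norm, Complex.normSq_apply, ← sq]
  have hinner : ∑ j, ∑ k, (inner ℂ (v j) (A x j k * v k)).re =
      ∑ j, ∑ k, A x j k * (v j).re * (v k).re + ∑ j, ∑ k, A x j k * (v j).im * (v k).im := by
    simp only [← Finset.sum_add_distrib]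
    congr! 2 with j _ k _
    simp only [RCLike.inner_apply, Complex.mul_re, Complex.mul_im, Complex.ofReal_re,
      Complex.ofReal_im, Complex.conj_re, Complex.conj_im]
    ring
  rw [hnorm, hinner, mul_add]
  exact add_le_add (hA.elliptic x _) (hA.elliptic x _)

theorem mul_sum_norm_sq_le (hA : EllipticCoeff A lam M) (v : Fin d → 𝓢(Ed d, ℂ)) :
    lam * ∑ j, ‖toL2 (v j)‖ ^ 2 ≤
      ∑ j, ∑ k, (inner ℂ (toL2 (v j)) (toL2 (mulCLM (fun x => A x j k) (v k)))).re := by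
  have hint : ∀ f g : L2 d, Integrable fun x => (inner ℂ (f x) (g x)).re :=
    fun f g => (L2.integrable_inner (𝕜 := ℂ) f g).re
  have hinner : ∀ f g : L2 d, (inner ℂ f g).re = ∫ x, (inner ℂ (f x) (g x)).re := fun f g => by
    rw [L2.inner_def]
    exact (integral_re (L2.integrable_inner (𝕜 := ℂ) f g)).symm
  have hnorm : ∀ f : L2 d, ‖f‖ ^ 2 = (inner ℂ f f).re := norm_sq_eq_re_inner (𝕜 := ℂ)
  simp only [hnorm, hinner]
  simp_rw [← integral_finsetSum _ fun _ _ => hint _ _]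
  rw [← integral_finsetSum _ fun j _ => integrable_finsetSum _ fun k _ => hint _ _,
    ← integral_const_mul]
  refine integral_mono_ae ((integrable_finsetSum _ fun j _ => hint _ _).const_mul _)
    (integrable_finsetSum _ fun j _ => integrable_finsetSum _ fun k _ => hint _ _) ?_
  have hv : ∀ᵐ x : Ed d, ∀ j, toL2 (v j) x = v j x := ae_all_iff.2 fun j => toL2_ae _
  have hAv : ∀ᵐ x : Ed d, ∀ j k, toL2 (mulCLM (fun x => A x j k) (v k)) x = A x j k * v k x :=
    ae_all_iff.2 fun j => ae_all_iff.2 fun k => (toL2_ae _).trans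
      (.of_forall fun x => mulCLM_apply (hA.temperate j k) (v k) x)
  filter_upwards [hv, hAv] with x hvx hAvx
  simp only [hvx, hAvx]
  refine le_of_eq_of_le ?_ (hA.elliptic_complex x fun j => v j x)
  simp only [norm_sq_eq_re_inner (𝕜 := ℂ), RCLike.re_to_complex]

theorem mul_sum_norm_pd_sq_le (hA : EllipticCoeff A lam M) (u : 𝓢(Ed d, ℂ)) :
    lam * ∑ j, ‖toL2 (pdCLM j u)‖ ^ 2 ≤ (inner ℂ (toL2 u) (toL2 (divGradCLM A u))).re := by
  refine (hA.mul_sum_norm_sq_le fun j => pdCLM j u).trans_eq ?_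
  simp only [divGradCLM_eq_sum, map_neg, map_sum, inner_neg_right, inner_sum, inner_toL2_pdCLM,
    Finset.sum_neg_distrib, neg_neg, Complex.re_sum]

theorem re_inner_divGrad_nonneg (hA : EllipticCoeff A lam M) (u : 𝓢(Ed d, ℂ)) :
    0 ≤ (inner ℂ (toL2 u) (toL2 (divGradCLM A u))).re :=
  (mul_nonneg hA.pos.le (by positivity)).trans (hA.mul_sum_norm_pd_sq_le u)

theorem sum_norm_pd_le (hA : EllipticCoeff A lam M) (u : 𝓢(Ed d, ℂ)) :
    ∑ j, ‖toL2 (pdCLM j u)‖ ≤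
      √(d / lam) * √(inner ℂ (toL2 u) (toL2 (divGradCLM A u))).re := by
  have hlam := hA.pos
  rw [← Real.sqrt_mul (by positivity)]
  refine Real.le_sqrt_of_sq_le ?_
  rw [div_mul_eq_mul_div, le_div_iff₀ hlam]
  calc (∑ j, ‖toL2 (pdCLM j u)‖) ^ 2 * lam
      ≤ (d * ∑ j, ‖toL2 (pdCLM j u)‖ ^ 2) * lam := by
        gcongr
        simpa using sq_sum_le_card_mul_sum_sq (s := Finset.univ)
          (f := fun j => ‖toL2 (pdCLM j u)‖)
    _ = d * (lam * ∑ j, ‖toL2 (pdCLM j u)‖ ^ 2) := by ring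
    _ ≤ _ := by gcongr; exact hA.mul_sum_norm_pd_sq_le u

/-- Testing `-div (A ∇u)` against `∂_l ∂_l u` and integrating by parts twice. -/
theorem inner_pd_pd_divGrad (hA : EllipticCoeff A lam M) (l : Fin d) (u : 𝓢(Ed d, ℂ)) :
    inner ℂ (toL2 (pdCLM l (pdCLM l u))) (toL2 (divGradCLM A u)) =
      -(∑ j, ∑ k, inner ℂ (toL2 (pdCLM j (pdCLM l u)))
          (toL2 (mulCLM (fun x => A x j k) (pdCLM k (pdCLM l u)))) +
        ∑ j, ∑ k, inner ℂ (toL2 (pdCLM j (pdCLM l u)))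
          (toL2 (mulCLM (fun x => fderiv ℝ (fun y => A y j k) x (EuclideanSpace.single l 1))
            (pdCLM k u)))) := by
  simp only [divGradCLM_eq_sum, map_neg, map_sum, inner_neg_right, inner_sum,
    ← Finset.sum_add_distrib]
  congr! 3 with j _ k _
  rw [← inner_add_right, ← map_add, pdCLM_comm k l, ← pdCLM_mulCLM (hA.temperate j k),
    inner_toL2_pdCLM, inner_toL2_pdCLM, pdCLM_comm j l]

theorem mul_sum_norm_pd_pd_sq_le (hA : EllipticCoeff A lam M) (l : Fin d) (u : 𝓢(Ed d, ℂ)) :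
    lam * ∑ j, ‖toL2 (pdCLM j (pdCLM l u))‖ ^ 2 ≤
      (∑ j, ‖toL2 (pdCLM j (pdCLM l u))‖) *
        (‖toL2 (divGradCLM A u)‖ + M * ∑ k, ‖toL2 (pdCLM k u)‖) := by
  have hneg_re : ∀ f g : L2 d, -(inner ℂ f g).re ≤ ‖f‖ * ‖g‖ := fun f g =>
    (neg_le_abs _).trans ((Complex.abs_re_le_norm _).trans (norm_inner_le_norm f g))
  have hcomm : -∑ j, ∑ k, (inner ℂ (toL2 (pdCLM j (pdCLM l u))) (toL2 (mulCLM (fun x =>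
        fderiv ℝ (fun y => A y j k) x (EuclideanSpace.single l 1)) (pdCLM k u)))).re ≤
      (∑ j, ‖toL2 (pdCLM j (pdCLM l u))‖) * (M * ∑ k, ‖toL2 (pdCLM k u)‖) := by
    simp only [Finset.mul_sum, Finset.sum_mul, ← Finset.sum_neg_distrib]
    rw [Finset.sum_comm]
    gcongr with j _ k _
    refine (hneg_re _ _).trans ?_
    gcongr
    exact norm_toL2_mulCLM_le (hasTemperateGrowth_fderiv_apply (hA.temperate _ _) _)
      (fun x => hA.abs_fderiv_le x _ _ l) _
  have htest := congrArg Complex.re (hA.inner_pd_pd_divGrad l u)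
  rw [Complex.neg_re, Complex.add_re] at htest
  simp only [Complex.re_sum] at htest
  calc _ ≤ _ := hA.mul_sum_norm_sq_le fun j => pdCLM j (pdCLM l u)
    _ ≤ ‖toL2 (pdCLM l (pdCLM l u))‖ * ‖toL2 (divGradCLM A u)‖ +
        (∑ j, ‖toL2 (pdCLM j (pdCLM l u))‖) * (M * ∑ k, ‖toL2 (pdCLM k u)‖) := by
      linarith [hneg_re (toL2 (pdCLM l (pdCLM l u))) (toL2 (divGradCLM A u))]
    _ ≤ _ := by
      rw [mul_add]
      gcongr
      exact Finset.single_le_sum (f := fun j => ‖toL2 (pdCLM j (pdCLM l u))‖)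
        (fun _ _ => norm_nonneg _) (Finset.mem_univ l)

theorem sum_norm_pd_pd_le (hA : EllipticCoeff A lam M) (l : Fin d) (u : 𝓢(Ed d, ℂ)) :
    ∑ j, ‖toL2 (pdCLM j (pdCLM l u))‖ ≤
      d / lam * (‖toL2 (divGradCLM A u)‖ + M * ∑ k, ‖toL2 (pdCLM k u)‖) := by
  have hlam := hA.pos
  have hM := hA.bound_nonneg l
  set a := ∑ j, ‖toL2 (pdCLM j (pdCLM l u))‖
  set b := ‖toL2 (divGradCLM A u)‖ + M * ∑ k, ‖toL2 (pdCLM k u)‖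
  have hb : 0 ≤ b := by positivity
  have hsq : lam * a ^ 2 ≤ d * (a * b) :=
    calc lam * a ^ 2 ≤ lam * (d * ∑ j, ‖toL2 (pdCLM j (pdCLM l u))‖ ^ 2) := by
          gcongr
          simpa using sq_sum_le_card_mul_sum_sq (s := Finset.univ)
            (f := fun j => ‖toL2 (pdCLM j (pdCLM l u))‖)
      _ = d * (lam * ∑ j, ‖toL2 (pdCLM j (pdCLM l u))‖ ^ 2) := by ring
      _ ≤ d * (a * b) :=
          mul_le_mul_of_nonneg_left (hA.mul_sum_norm_pd_pd_sq_le l u) d.cast_nonneg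
  rcases (by positivity : 0 ≤ a).eq_or_lt with ha | ha
  · exact ha ▸ mul_nonneg (by positivity) hb
  · rw [div_mul_eq_mul_div, le_div_iff₀ hlam]
    exact le_of_mul_le_mul_right (by linarith) ha

end EllipticCoeff

end Ellipticity

theorem norm_le_norm_add_of_re_inner_nonneg {𝕜 E : Type*} [RCLike 𝕜] [SeminormedAddCommGroup E]
    [InnerProductSpace 𝕜 E] {x y : E} (h : 0 ≤ RCLike.re (inner 𝕜 x y)) : ‖x‖ ≤ ‖x + y‖ := by
  refine (pow_le_pow_iff_left₀ (norm_nonneg _) (norm_nonneg _) two_ne_zero).1 ?_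
  rw [norm_add_sq (𝕜 := 𝕜) x y]
  linarith [sq_nonneg ‖y‖]

theorem re_inner_le_norm_add_sq {𝕜 E : Type*} [RCLike 𝕜] [SeminormedAddCommGroup E]
    [InnerProductSpace 𝕜 E] {x y : E} (h : 0 ≤ RCLike.re (inner 𝕜 x y)) :
    RCLike.re (inner 𝕜 x y) ≤ ‖x + y‖ ^ 2 := by
  rw [norm_add_sq (𝕜 := 𝕜) x y]
  linarith [sq_nonneg ‖x‖, sq_nonneg ‖y‖]

namespace EllipticCoeff

variable {d : ℕ} {A B : Ed d → Fin d → Fin d → ℝ} {lam M : ℝ}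

theorem sum_norm_pd_pd_le_graph (hA : EllipticCoeff A lam M) (l : Fin d) (u : 𝓢(Ed d, ℂ)) :
    ∑ j, ‖toL2 (pdCLM j (pdCLM l u))‖ ≤ d / lam * (1 + M * √(d / lam)) *
      (‖toL2 (divGradCLM A u)‖ + √(inner ℂ (toL2 u) (toL2 (divGradCLM A u))).re) := by
  have hlam := hA.pos
  have hM := hA.bound_nonneg l
  set p := ‖toL2 (divGradCLM A u)‖
  set e := √(inner ℂ (toL2 u) (toL2 (divGradCLM A u))).re
  calc _ ≤ _ := hA.sum_norm_pd_pd_le l u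
    _ ≤ d / lam * (p + M * (√(d / lam) * e)) := by gcongr; exact hA.sum_norm_pd_le u
    _ ≤ d / lam * (p + M * (√(d / lam) * e) + (e + M * √(d / lam) * p)) := by
        refine mul_le_mul_of_nonneg_left (le_add_of_nonneg_right ?_) ?_ <;> positivity
    _ = _ := by ring

theorem norm_divGrad_le (hA : EllipticCoeff A lam M) (u : 𝓢(Ed d, ℂ)) :
    ‖toL2 (divGradCLM A u)‖ ≤ ‖oneAddDivGrad A u‖ := by
  rw [oneAddDivGrad_apply, add_comm]
  refine norm_le_norm_add_of_re_inner_nonneg (𝕜 := ℂ) ?_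
  rw [inner_re_symm]
  exact hA.re_inner_divGrad_nonneg u

theorem sqrt_re_inner_divGrad_le (hA : EllipticCoeff A lam M) (u : 𝓢(Ed d, ℂ)) :
    √(inner ℂ (toL2 u) (toL2 (divGradCLM A u))).re ≤ ‖oneAddDivGrad A u‖ := by
  rw [oneAddDivGrad_apply]
  exact Real.sqrt_le_iff.2
    ⟨norm_nonneg _, re_inner_le_norm_add_sq (𝕜 := ℂ) (hA.re_inner_divGrad_nonneg u)⟩

theorem sum_norm_pd_le_oneAddDivGrad (hA : EllipticCoeff A lam M) (u : 𝓢(Ed d, ℂ)) :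
    ∑ j, ‖toL2 (pdCLM j u)‖ ≤ √(d / lam) * ‖oneAddDivGrad A u‖ :=
  (hA.sum_norm_pd_le u).trans (by gcongr; exact hA.sqrt_re_inner_divGrad_le u)

theorem norm_divGrad_le_sum (hA : EllipticCoeff A lam M) (u : 𝓢(Ed d, ℂ)) :
    ‖toL2 (divGradCLM A u)‖ ≤
      ∑ k, M * (∑ j, ‖toL2 (pdCLM j (pdCLM k u))‖ + d * ‖toL2 (pdCLM k u)‖) := by
  rw [divGradCLM_eq_sum, Finset.sum_comm, map_neg, norm_neg, map_sum]
  refine norm_sum_le_of_le _ fun k _ => ?_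
  rw [map_sum]
  calc ‖∑ j, toL2 (pdCLM j (mulCLM (fun x => A x j k) (pdCLM k u)))‖
      ≤ ∑ j, (M * ‖toL2 (pdCLM j (pdCLM k u))‖ + M * ‖toL2 (pdCLM k u)‖) := by
        refine norm_sum_le_of_le _ fun j _ => ?_
        rw [pdCLM_mulCLM (hA.temperate j k), map_add]
        exact norm_add_le_of_le
          (norm_toL2_mulCLM_le (hA.temperate j k) (fun x => hA.abs_le x j k) _)
          (norm_toL2_mulCLM_le (hasTemperateGrowth_fderiv_apply (hA.temperate j k) _)
            (fun x => hA.abs_fderiv_le x j k j) _)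
    _ = _ := by
        rw [Finset.sum_add_distrib, ← Finset.mul_sum, Finset.sum_const, Finset.card_fin,
          nsmul_eq_mul]
        ring

theorem exists_norm_divGrad_le (d : ℕ) (lam M : ℝ) : ∃ C, ∀ {A B : Ed d → Fin d → Fin d → ℝ},
    EllipticCoeff A lam M → EllipticCoeff B lam M → ∀ u : 𝓢(Ed d, ℂ),
      ‖toL2 (divGradCLM A u)‖ ≤ C * ‖oneAddDivGrad B u‖ := by
  refine ⟨∑ _k : Fin d, M * (d / lam * (1 + M * √(d / lam)) * 2 + d * √(d / lam)),
    fun {A B} hA hB u => ?_⟩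
  rw [Finset.sum_mul]
  refine (hA.norm_divGrad_le_sum u).trans (Finset.sum_le_sum fun k _ => ?_)
  have hlam := hB.pos
  have hM := hA.bound_nonneg k
  have hgraph : ‖toL2 (divGradCLM B u)‖ + √(inner ℂ (toL2 u) (toL2 (divGradCLM B u))).re ≤
      2 * ‖oneAddDivGrad B u‖ := by
    linarith [hB.norm_divGrad_le u, hB.sqrt_re_inner_divGrad_le u]
  have hpd : ‖toL2 (pdCLM k u)‖ ≤ √(d / lam) * ‖oneAddDivGrad B u‖ :=
    (Finset.single_le_sum (f := fun k => ‖toL2 (pdCLM k u)‖) (fun _ _ => norm_nonneg _)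
      (Finset.mem_univ k)).trans (hB.sum_norm_pd_le_oneAddDivGrad u)
  calc M * (∑ j, ‖toL2 (pdCLM j (pdCLM k u))‖ + d * ‖toL2 (pdCLM k u)‖)
      ≤ M * (d / lam * (1 + M * √(d / lam)) * (2 * ‖oneAddDivGrad B u‖) +
          d * (√(d / lam) * ‖oneAddDivGrad B u‖)) := by
        gcongr
        exact (hB.sum_norm_pd_pd_le_graph k u).trans (by gcongr)
    _ = _ := by ring

end EllipticCoeff

section RangeOfOneAddDivGrad

variable {d : ℕ}

theorem divGradCLM_smul_add_smul {A B : Ed d → Fin d → Fin d → ℝ}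
    (hA : ∀ j k, (fun x => A x j k).HasTemperateGrowth)
    (hB : ∀ j k, (fun x => B x j k).HasTemperateGrowth) (s t : ℝ) :
    divGradCLM (s • A + t • B) = (s : ℂ) • divGradCLM A + (t : ℂ) • divGradCLM B := by
  have hmul : ∀ j k, mulCLM (fun x => (s • A + t • B) x j k) =
      (s : ℂ) • mulCLM (fun x => A x j k) + (t : ℂ) • mulCLM fun x => B x j k := fun j k => by
    have hA' := hA j k
    have hB' := hB j k
    ext u x
    have hsum : (fun x => (s • A + t • B) x j k).HasTemperateGrowth := by
      simp only [Pi.add_apply, Pi.smul_apply, smul_eq_mul]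
      fun_prop
    rw [mulCLM_apply hsum]
    simp only [mulCLM_apply hA', mulCLM_apply hB', add_apply, smul_apply,
      Pi.add_apply, Pi.smul_apply, smul_eq_mul, ofReal_add, ofReal_mul]
    ring
  simp only [divGradCLM, hmul, ContinuousLinearMap.add_comp, ContinuousLinearMap.comp_add,
    ContinuousLinearMap.smul_comp, ContinuousLinearMap.comp_smul, Finset.sum_add_distrib,
    ← Finset.smul_sum, neg_add, smul_neg]

theorem fourier_pdCLM (j : Fin d) (u : 𝓢(Ed d, ℂ)) (ξ : Ed d) :
    𝓕 (pdCLM j u) ξ = 2 * π * I * ξ j * 𝓕 u ξ := by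
  have hinner : (fun x : Ed d => inner ℝ x (EuclideanSpace.single j 1)).HasTemperateGrowth := by
    fun_prop
  rw [pdCLM, LineDeriv.lineDerivOpCLM_apply, SchwartzMap.fourier_lineDerivOp_eq, smul_apply,
    SchwartzMap.smulLeftCLM_apply_apply hinner, EuclideanSpace.inner_single_right, smul_eq_mul,
    Complex.real_smul]
  simp [mul_assoc]

theorem divGradCLM_one (u : 𝓢(Ed d, ℂ)) :
    divGradCLM (fun _ j k => (1 : Matrix (Fin d) (Fin d) ℝ) j k) u =
      -∑ j, pdCLM j (pdCLM j u) := by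
  have hmul : ∀ j k (v : 𝓢(Ed d, ℂ)),
      mulCLM (fun _ => (1 : Matrix (Fin d) (Fin d) ℝ) j k) v = if j = k then v else 0 :=
    fun j k v => by
      ext x
      rw [mulCLM_apply (by fun_prop), Matrix.one_apply]
      split_ifs <;> simp
  simp only [divGradCLM_eq_sum, hmul, apply_ite (pdCLM _), map_zero, Finset.sum_ite_eq,
    Finset.mem_univ, if_true]

theorem fourier_divGradCLM_one (u : 𝓢(Ed d, ℂ)) (ξ : Ed d) :
    𝓕 (divGradCLM (fun _ j k => (1 : Matrix (Fin d) (Fin d) ℝ) j k) u) ξ =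
      ((2 * π) ^ 2 * ‖ξ‖ ^ 2 : ℝ) * 𝓕 u ξ := by
  have hsum : 𝓕 (∑ j, pdCLM j (pdCLM j u)) = ∑ j, 𝓕 (pdCLM j (pdCLM j u)) :=
    map_sum (FourierTransform.fourierCLM ℂ 𝓢(Ed d, ℂ)) _ _
  rw [divGradCLM_one, FourierTransform.fourier_neg, hsum, neg_apply, sum_apply,
    EuclideanSpace.real_norm_sq_eq]
  simp only [fourier_pdCLM]
  push_cast
  rw [Finset.mul_sum, Finset.sum_mul, ← Finset.sum_neg_distrib]
  refine Finset.sum_congr rfl fun j _ => ?_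
  linear_combination (-4 * π ^ 2 * (ξ j : ℂ) ^ 2 * 𝓕 u ξ) * Complex.I_sq

theorem exists_oneAddDivGrad_one_eq (v : 𝓢(Ed d, ℂ)) :
    ∃ u, oneAddDivGrad (fun _ j k => (1 : Matrix (Fin d) (Fin d) ℝ) j k) u = toL2 v := by
  let m : Ed d → ℝ := fun ξ => (1 + ‖(2 * π) • ξ‖ ^ 2) ^ (-1 : ℝ)
  have hm : m.HasTemperateGrowth :=
    (Function.hasTemperateGrowth_one_add_norm_sq_rpow (Ed d) (-1)).comp
      (g := fun y : Ed d => (1 + ‖y‖ ^ 2) ^ (-1 : ℝ))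
      (f := fun ξ : Ed d => (2 * π) • ξ) (by fun_prop)
  have hm_mul : ∀ ξ, (1 + (2 * π) ^ 2 * ‖ξ‖ ^ 2) * m ξ = 1 := fun ξ => by
    simp only [m, Real.rpow_neg_one, norm_smul, mul_pow, norm_mul, Real.norm_ofNat,
      Real.norm_of_nonneg Real.pi_nonneg]
    exact mul_inv_cancel₀ (by positivity)
  let u : 𝓢(Ed d, ℂ) := 𝓕⁻ (mulCLM m (𝓕 v))
  refine ⟨u, congrArg toL2 ?_⟩
  refine (FourierTransform.fourierCLE ℂ 𝓢(Ed d, ℂ)).injective ?_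
  ext ξ
  have hu : 𝓕 u ξ = m ξ * 𝓕 v ξ := by
    rw [FourierTransform.fourier_fourierInv_eq, mulCLM_apply hm]
  change 𝓕 (u + divGradCLM _ u) ξ = 𝓕 v ξ
  rw [FourierTransform.fourier_add, add_apply, fourier_divGradCLM_one, hu, ← mul_assoc,
    ← add_mul]
  nth_rw 2 [← one_mul (𝓕 v ξ)]
  congr 1
  rw [← ofReal_mul, ← ofReal_add, ← ofReal_one, ← hm_mul ξ]
  congr 1
  ring

theorem EllipticCoeff.denseRange_oneAddDivGrad {A : Ed d → Fin d → Fin d → ℝ} {lam M : ℝ}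
    (hA : EllipticCoeff A lam M) : DenseRange (oneAddDivGrad A) := by
  let A₀ : Ed d → Fin d → Fin d → ℝ := fun _ j k => (1 : Matrix (Fin d) (Fin d) ℝ) j k
  have hlam : 0 < min lam 1 := lt_min hA.pos one_pos
  replace hA := hA.mono hlam (min_le_left _ _) (le_max_left M 1)
  have hA₀ : EllipticCoeff A₀ _ _ :=
    (EllipticCoeff.one d).mono hlam (min_le_right _ _) (le_max_right M 1)
  let L : ℝ → 𝓢(Ed d, ℂ) →ₗ[ℂ] L2 d := fun t => oneAddDivGrad ((1 - t) • A₀ + t • A)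
  obtain ⟨C, hC⟩ := exists_norm_divGrad_le d (min lam 1) (max M 1)
  have hpath : ∀ s ∈ Set.Icc (0 : ℝ) 1, ∀ t ∈ Set.Icc (0 : ℝ) 1, ∀ u,
      ‖L s u - L t u‖ ≤ (C + C) * |s - t| * ‖L s u‖ := by
    rintro s ⟨hs0, hs1⟩ t - u
    have hs := hA₀.convexCombination hA (sub_nonneg.2 hs1) hs0 (sub_add_cancel 1 s)
    have hdiff : L s u - L t u =
        ((s - t : ℝ) : ℂ) • (toL2 (divGradCLM A u) - toL2 (divGradCLM A₀ u)) := by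
      simp only [L, ContinuousLinearMap.coe_coe, oneAddDivGrad_apply,
        divGradCLM_smul_add_smul hA₀.temperate hA.temperate, add_apply, smul_apply, map_add,
        map_smul]
      push_cast
      module
    rw [hdiff, norm_smul, Complex.norm_real, Real.norm_eq_abs]
    calc |s - t| * ‖toL2 (divGradCLM A u) - toL2 (divGradCLM A₀ u)‖
        ≤ |s - t| * (C * ‖L s u‖ + C * ‖L s u‖) := by
          gcongr
          exact norm_sub_le_of_le (hC hA hs u) (hC hA₀ hs u)
      _ = _ := by ring
  have h0 : DenseRange (L 0) := by
    refine (SchwartzMap.denseRange_toLpCLM (by norm_num)).mono ?_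
    rintro _ ⟨v, rfl⟩
    obtain ⟨u, hu⟩ := exists_oneAddDivGrad_one_eq v
    have hL : L 0 = oneAddDivGrad A₀ := by simp [L]
    exact ⟨u, (congrArg (· u) hL).trans hu⟩
  have hL : L 1 = oneAddDivGrad A := by simp [L]
  have h1 := denseRange_of_lipschitz_path hpath h0
  rw [hL] at h1
  exact h1

end RangeOfOneAddDivGrad

section GoodSymbol

variable {φ ψ : ℝ → ℂ}

theorem GoodSymbol.add (hφ : GoodSymbol φ) (hψ : GoodSymbol ψ) :
    GoodSymbol fun x => φ x + ψ x :=
  let ⟨C, hC⟩ := hφ.2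
  let ⟨D, hD⟩ := hψ.2
  ⟨hφ.1.add hψ.1, C + D, fun x hx => norm_add_le_of_le (hC x hx) (hD x hx)⟩

theorem GoodSymbol.mul (hφ : GoodSymbol φ) (hψ : GoodSymbol ψ) :
    GoodSymbol fun x => φ x * ψ x :=
  let ⟨C, hC⟩ := hφ.2
  let ⟨D, hD⟩ := hψ.2
  ⟨hφ.1.mul hψ.1, C * D, fun x hx => norm_mul_le_of_le (hC x hx) (hD x hx)⟩

theorem goodSymbol_const (c : ℂ) : GoodSymbol fun _ => c :=
  ⟨continuous_const, ‖c‖, fun _ _ => le_rfl⟩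

theorem goodSymbol_resolvent {z : ℂ} (hz : z.im ≠ 0) : GoodSymbol fun x => ((x : ℂ) - z)⁻¹ := by
  have him : ∀ x : ℝ, |z.im| ≤ ‖(x : ℂ) - z‖ := fun x => by
    simpa using Complex.abs_im_le_norm ((x : ℂ) - z)
  have hne : ∀ x : ℝ, (x : ℂ) - z ≠ 0 :=
    fun x => norm_pos_iff.1 ((abs_pos.2 hz).trans_le (him x))
  refine ⟨(continuous_ofReal.sub continuous_const).inv₀ hne, |z.im|⁻¹, fun x _ => ?_⟩
  rw [norm_inv]
  exact inv_anti₀ (abs_pos.2 hz) (him x)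

end GoodSymbol

/-- The symbol `λ ↦ (1 + λ)⁻¹` of `(1 + P)⁻¹`, extended by `1` to the negative half-line so that
it is continuous. -/
def resolventSymbol (x : ℝ) : ℂ := ((1 + max x 0)⁻¹ : ℝ)

theorem goodSymbol_resolventSymbol : GoodSymbol resolventSymbol := by
  have hpos : ∀ x : ℝ, 0 < 1 + max x 0 := fun x => by positivity
  refine ⟨continuous_ofReal.comp (Continuous.inv₀ (by fun_prop) fun x => (hpos x).ne'), 1,
    fun x _ => ?_⟩
  rw [resolventSymbol, Complex.norm_real, Real.norm_of_nonneg (inv_nonneg.2 (hpos x).le)]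
  exact inv_le_one_of_one_le₀ (le_add_of_nonneg_right (le_max_right _ _))

namespace SpectralCalc

variable {d : ℕ} {G : Ed d → Fin d → Fin d → ℝ} (S : SpectralCalc d G)

theorem map_mul_apply {φ ψ : ℝ → ℂ} (hφ : GoodSymbol φ) (hψ : GoodSymbol ψ) (f : L2 d) :
    S.map (fun x => φ x * ψ x) f = S.map φ (S.map ψ f) := by
  rw [S.map_mul φ ψ hφ hψ, ContinuousLinearMap.comp_apply]

theorem map_add_apply {φ ψ : ℝ → ℂ} (hφ : GoodSymbol φ) (hψ : GoodSymbol ψ) (f : L2 d) :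
    S.map (fun x => φ x + ψ x) f = S.map φ f + S.map ψ f := by
  rw [S.map_add φ ψ hφ hψ, add_apply]

theorem norm_map_apply_le {φ : ℝ → ℂ} {C : ℝ} (hC : ∀ x, 0 ≤ x → ‖φ x‖ ≤ C) (f : L2 d) :
    ‖S.map φ f‖ ≤ C * ‖f‖ :=
  (S.map φ).le_of_opNorm_le (S.map_norm φ C hC) f

theorem re_inner_map_map_le {φ ψ : ℝ → ℂ} (hφ : GoodSymbol φ) (hψ : GoodSymbol ψ) {C : ℝ}
    (hC : ∀ x, 0 ≤ x → ‖φ x‖ * ‖ψ x‖ ≤ C) (f : L2 d) :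
    (inner ℂ (S.map φ f) (S.map ψ f)).re ≤ C * ‖f‖ ^ 2 := by
  have hφ' : GoodSymbol fun x => conj (φ x) :=
    ⟨continuous_conj.comp hφ.1, hφ.2.imp fun C hC x hx => by
      simpa only [RCLike.norm_conj] using hC x hx⟩
  rw [← ContinuousLinearMap.adjoint_inner_right, S.map_star φ hφ, ← S.map_mul_apply hφ' hψ]
  calc _ ≤ ‖f‖ * ‖S.map (fun x => conj (φ x) * ψ x) f‖ :=
        (Complex.re_le_norm _).trans (norm_inner_le_norm _ _)
    _ ≤ ‖f‖ * (C * ‖f‖) := by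
        gcongr
        exact S.norm_map_apply_le (fun x hx => by simpa using hC x hx) f
    _ = C * ‖f‖ ^ 2 := by ring

theorem inner_divGradCLM_map_resolvent (hG : ∀ j k, (fun x => G x j k).HasTemperateGrowth)
    {z : ℂ} (hz : z.im ≠ 0) (f : L2 d) (u : 𝓢(Ed d, ℂ)) :
    inner ℂ (toL2 (divGradCLM G u)) (S.map (fun x => ((x : ℂ) - z)⁻¹) f) =
      inner ℂ (toL2 u) (f + z • S.map (fun x => ((x : ℂ) - z)⁻¹) f) := by
  have h := S.map_resolvent z hz f (conjCLM u)
  simp only [← divGradCLM_apply hG, divGradCLM_conjCLM hG, conjCLM_apply, ← inner_toL2] at h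
  rw [inner_add_right, inner_smul_right, ← h, sub_add_cancel]

theorem map_resolventSymbol_apply (f : L2 d) :
    S.map resolventSymbol f =
      S.map (fun x => ((x : ℂ) - I)⁻¹) (f - (1 + I) • S.map resolventSymbol f) := by
  have hI : GoodSymbol fun x => ((x : ℂ) - I)⁻¹ := goodSymbol_resolvent (by simp)
  have hprod := hI.mul goodSymbol_resolventSymbol
  have hscaled : GoodSymbol fun x => -(1 + I) * (((x : ℂ) - I)⁻¹ * resolventSymbol x) :=
    (goodSymbol_const _).mul hprod
  have hidentity : S.map resolventSymbol = S.map fun x =>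
      ((x : ℂ) - I)⁻¹ + -(1 + I) * (((x : ℂ) - I)⁻¹ * resolventSymbol x) := by
    refine S.map_congr _ _ goodSymbol_resolventSymbol (hI.add hscaled) fun x hx => ?_
    have hxI : (x : ℂ) - I ≠ 0 := fun h => by simpa using congrArg Complex.im h
    have hx1 : (1 + x : ℂ) ≠ 0 := by norm_cast; positivity
    simp only [resolventSymbol, max_eq_left hx]
    push_cast
    field_simp
    ring
  conv_lhs => rw [hidentity]
  rw [S.map_add_apply hI hscaled, S.map_smul _ _ hprod, smul_apply,
    S.map_mul_apply hI goodSymbol_resolventSymbol, map_sub, ContinuousLinearMap.map_smul]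
  module

theorem inner_oneAddDivGrad_map_resolventSymbol
    (hG : ∀ j k, (fun x => G x j k).HasTemperateGrowth) (f : L2 d) (u : 𝓢(Ed d, ℂ)) :
    inner ℂ (oneAddDivGrad G u) (S.map resolventSymbol f) = inner ℂ (toL2 u) f := by
  have h := S.inner_divGradCLM_map_resolvent hG (z := I) (by simp)
    (f - (1 + I) • S.map resolventSymbol f) u
  rw [← map_resolventSymbol_apply, inner_add_right, inner_sub_right, inner_smul_right,
    inner_smul_right] at h
  rw [oneAddDivGrad_apply, inner_add_left, h]
  ring

theorem map_resolventSymbol_oneAddDivGrad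
    (hG : ∀ j k, (fun x => G x j k).HasTemperateGrowth) (u : 𝓢(Ed d, ℂ)) :
    S.map resolventSymbol (oneAddDivGrad G u) = toL2 u := by
  have hself : ContinuousLinearMap.adjoint (S.map resolventSymbol) = S.map resolventSymbol := by
    rw [S.map_star _ goodSymbol_resolventSymbol]
    simp only [resolventSymbol, Complex.conj_ofReal]
    rfl
  refine ext_inner_right ℂ fun f => ?_
  rw [← hself, ContinuousLinearMap.adjoint_inner_left,
    S.inner_oneAddDivGrad_map_resolventSymbol hG]

/-- Vectors `g(P) f` with `λ g(λ)` bounded lie in the domain of `P`. -/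
theorem exists_map_resolventSymbol_eq {g : ℝ → ℂ} (hg : GoodSymbol g)
    (hxg : GoodSymbol fun x => (max x 0 : ℝ) * g x) (f : L2 d) :
    ∃ h, S.map resolventSymbol h = S.map g f ∧
      h - S.map resolventSymbol h = S.map (fun x => (max x 0 : ℝ) * g x) f := by
  have hmap : S.map resolventSymbol (S.map (fun x => g x + (max x 0 : ℝ) * g x) f) =
      S.map g f := by
    rw [← S.map_mul_apply goodSymbol_resolventSymbol (hg.add hxg)]
    congr 2
    ext x
    have hpos : 0 < 1 + max x 0 := by positivity
    have hinv : resolventSymbol x * ((1 + max x 0 : ℝ) : ℂ) = 1 := by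
      rw [resolventSymbol, ← ofReal_mul, inv_mul_cancel₀ hpos.ne', ofReal_one]
    rw [ofReal_add, ofReal_one] at hinv
    linear_combination g x * hinv
  refine ⟨_, hmap, ?_⟩
  rw [hmap, S.map_add_apply hg hxg, add_sub_cancel_left]

end SpectralCalc

section PdResolvent

variable {d : ℕ} {G : Ed d → Fin d → Fin d → ℝ} {lam M : ℝ}

/-- The bounded operator `∂_j (1 + P)⁻¹` on `L²`, obtained by extending `(1 + P) u ↦ ∂_j u` from
the dense image of the Schwartz functions. -/
def pdResolvent (G : Ed d → Fin d → Fin d → ℝ) (j : Fin d) : L2 d →L[ℂ] L2 d :=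
  (toL2 ∘L pdCLM j).toLinearMap.extendOfNorm (oneAddDivGrad G).toLinearMap

theorem pdResolvent_oneAddDivGrad (hG : EllipticCoeff G lam M) (j : Fin d) (u : 𝓢(Ed d, ℂ)) :
    pdResolvent G j (oneAddDivGrad G u) = toL2 (pdCLM j u) :=
  LinearMap.extendOfNorm_eq (f := (toL2 ∘L pdCLM j).toLinearMap)
    (e := (oneAddDivGrad G).toLinearMap) hG.denseRange_oneAddDivGrad
    ⟨√(d / lam), fun v => (Finset.single_le_sum (f := fun k => ‖toL2 (pdCLM k v)‖)
      (fun _ _ => norm_nonneg _) (Finset.mem_univ j)).trans (hG.sum_norm_pd_le_oneAddDivGrad v)⟩ u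

theorem integral_pdResolvent_mul (hG : EllipticCoeff G lam M) (S : SpectralCalc d G) (j : Fin d)
    (h : L2 d) (u : 𝓢(Ed d, ℂ)) :
    ∫ x, pdResolvent G j h x * u x = -∫ x, S.map resolventSymbol h x * pd d j u x := by
  have hinner : inner ℂ (toL2 (conjCLM u)) (pdResolvent G j h) =
      -inner ℂ (toL2 (pdCLM j (conjCLM u))) (S.map resolventSymbol h) := by
    refine hG.denseRange_oneAddDivGrad.induction_on h
      (isClosed_eq (by fun_prop) (by fun_prop)) fun v => ?_
    rw [pdResolvent_oneAddDivGrad hG, S.map_resolventSymbol_oneAddDivGrad hG.temperate,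
      inner_toL2_pdCLM]
  simpa only [inner_toL2, pdCLM_conjCLM, conjCLM_apply, Complex.conj_conj, pdCLM_apply]
    using hinner

end PdResolvent

theorem Standing.exists_ellipticCoeff {d : ℕ} {G : Ed d → Fin d → Fin d → ℝ}
    (hG : Standing d G) : ∃ lam M, EllipticCoeff G lam M := by
  obtain ⟨hsmooth, -, lam, _, hlam, helliptic⟩ := hG
  choose C hC using fun j k => (hsmooth j k).2
  have hle : ∀ n j k, C j k n ≤ ∑ j, ∑ k, |C j k n| := fun n j k =>
    (le_abs_self _).trans <|
      (Finset.single_le_sum (f := fun k => |C j k n|) (fun _ _ => abs_nonneg _)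
        (Finset.mem_univ k)).trans
      (Finset.single_le_sum (f := fun j => ∑ k, |C j k n|)
        (fun _ _ => Finset.sum_nonneg fun _ _ => abs_nonneg _) (Finset.mem_univ j))
  refine ⟨lam, max (∑ j, ∑ k, |C j k 0|) (∑ j, ∑ k, |C j k 1|), hlam, fun j k => ?_,
    fun x j k => ?_, fun x j k l => ?_, fun x v => (helliptic x v).1⟩
  · exact ⟨(hsmooth j k).1, fun n => ⟨0, C j k n, fun x => by simpa using hC j k n x⟩⟩
  · rw [← Real.norm_eq_abs, ← norm_iteratedFDeriv_zero (𝕜 := ℝ) (f := fun y => G y j k)]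
    exact ((hC j k 0 x).trans (hle 0 j k)).trans (le_max_left _ _)
  · have hfderiv : ‖fderiv ℝ (fun y => G y j k) x‖ ≤ C j k 1 := by
      rw [← norm_iteratedFDeriv_one]
      exact hC j k 1 x
    have happly := (fderiv ℝ (fun y => G y j k) x).le_opNorm (EuclideanSpace.single l 1)
    rw [PiLp.norm_single, norm_one, mul_one, Real.norm_eq_abs] at happly
    exact (happly.trans hfderiv).trans ((hle 1 j k).trans (le_max_right _ _))

theorem norm_exp_mul_I_sub_exp_mul_I_le (a b : ℝ) :
    ‖Complex.exp (a * I) - Complex.exp (b * I)‖ ≤ |a - b| := by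
  have hfactor : Complex.exp (a * I) - Complex.exp (b * I) =
      Complex.exp (b * I) * (Complex.exp (I * (a - b : ℝ)) - 1) := by
    rw [mul_sub, ← Complex.exp_add, mul_one]
    push_cast
    ring_nf
  rw [hfactor, norm_mul, Complex.norm_exp_ofReal_mul_I, one_mul]
  exact Real.norm_exp_I_mul_ofReal_sub_one_le

theorem exists_continuous_modulation {V : Type*} [NormedAddCommGroup V] [InnerProductSpace ℝ V]
    [MeasurableSpace V] [OpensMeasurableSpace V] {μ : Measure V}
    [IsFiniteMeasureOnCompacts μ] (p : ℝ≥0∞) [Fact (1 ≤ p)] {m : V → ℂ} (hm : Continuous m)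
    (hmc : HasCompactSupport m) : ∃ k : V → Lp ℂ p μ, Continuous k ∧
      ∀ x, k x =ᵐ[μ] fun ξ => Complex.exp ((-(2 * π * inner ℝ ξ x) : ℝ) * I) * m ξ := by
  obtain ⟨r, hr⟩ := hmc.isCompact.isBounded.subset_closedBall (0 : V)
  have hm_mem : MemLp m p μ := hm.memLp_of_hasCompactSupport hmc
  have hmod : ∀ x, MemLp (fun ξ => Complex.exp ((-(2 * π * inner ℝ ξ x) : ℝ) * I) * m ξ) p μ :=
    fun x => Continuous.memLp_of_hasCompactSupport (by fun_prop) hmc.mul_left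
  refine ⟨fun x => (hmod x).toLp, ?_, fun x => (hmod x).coeFn_toLp⟩
  refine (LipschitzWith.of_dist_le_mul (K := (2 * π * max r 0 * ‖hm_mem.toLp‖).toNNReal)
    fun x y => ?_).continuous
  rw [Real.coe_toNNReal _ (by positivity), mul_right_comm, dist_eq_norm, dist_eq_norm]
  refine Lp.norm_le_mul_norm_of_ae_le_mul ?_
  filter_upwards [Lp.coeFn_sub (hmod x).toLp (hmod y).toLp, (hmod x).coeFn_toLp,
    (hmod y).coeFn_toLp, hm_mem.coeFn_toLp] with ξ hsub hx hy hmξ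
  rw [hsub, Pi.sub_apply, hx, hy, hmξ, ← sub_mul, norm_mul]
  by_cases hξ : ξ ∈ tsupport m
  swap
  · simp [image_eq_zero_of_notMem_tsupport hξ]
  gcongr
  have hξr : ‖ξ‖ ≤ max r 0 := (mem_closedBall_zero_iff.1 (hr hξ)).trans (le_max_left _ _)
  calc _ ≤ |2 * π * inner ℝ ξ (x - y)| := by
        refine (norm_exp_mul_I_sub_exp_mul_I_le _ _).trans_eq ?_
        rw [inner_sub_right, ← abs_neg]
        ring_nf
    _ = 2 * π * |inner ℝ ξ (x - y)| := by rw [abs_mul, abs_of_pos Real.two_pi_pos]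
    _ ≤ 2 * π * (max r 0 * ‖x - y‖) := by
        gcongr
        exact (abs_real_inner_le_norm _ _).trans (by gcongr)
    _ = _ := by ring

section FrequencyCutoff

variable {d : ℕ} {χ : Ed d → ℂ} {m : Ed d → ℝ}

theorem exists_compact_mul_fourierMultiplier (hχ : Continuous χ) (hχc : HasCompactSupport χ)
    (hm : ContDiff ℝ (⊤ : ℕ∞) m) (hmc : HasCompactSupport m) :
    ∃ A : L2 d →L[ℂ] L2 d, IsCompactOperator A ∧
      ∀ v : 𝓢(Ed d, ℂ), A (toL2 v) =ᵐ[volume] fun x => χ x * 𝓕⁻ (mulCLM m (𝓕 v)) x := by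
  have hm_ofReal : Continuous fun ξ => (m ξ : ℂ) := continuous_ofReal.comp hm.continuous
  obtain ⟨k, hk, hk_ae⟩ := exists_continuous_modulation (μ := volume) 2 hm_ofReal
    (hmc.comp_left (g := ((↑) : ℝ → ℂ)) ofReal_zero)
  obtain ⟨A, hAc, hA⟩ := exists_compact_clm_mul_inner (μ := (volume : Measure (Ed d)))
    (p := 2) (by simp) hχ hχc hk
  let F : L2 d →L[ℂ] L2 d := (Lp.fourierTransformₗᵢ (Ed d) ℂ).toContinuousLinearEquiv
  refine ⟨A ∘L F, hAc.comp_clm F, fun v => ?_⟩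
  have hF : F (toL2 v) = toL2 (𝓕 v) := SchwartzMap.toLp_fourier_eq v
  rw [ContinuousLinearMap.comp_apply, hF]
  filter_upwards [hA (toL2 (𝓕 v))] with x hx
  rw [hx, SchwartzMap.fourierInv_coe, Real.fourierInv_eq', L2.inner_def]
  congr 1
  refine integral_congr_ae ?_
  filter_upwards [hk_ae x, toL2_ae (𝓕 v)] with ξ hkξ hvξ
  rw [hkξ, hvξ, RCLike.inner_apply, mulCLM_apply (hmc.hasTemperateGrowth hm), map_mul,
    ← Complex.exp_conj, map_mul, Complex.conj_ofReal, Complex.conj_ofReal, Complex.conj_I,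
    smul_eq_mul, ofReal_neg, neg_mul_neg]
  ring

theorem norm_le_sum_norm_fourier_pdCLM_symbol (ξ : Ed d) :
    ‖ξ‖ ≤ ∑ l, ‖2 * π * I * ξ l‖ := by
  calc ‖ξ‖ ≤ ∑ l, ‖ξ l‖ := by
        rw [EuclideanSpace.norm_eq]
        exact Real.sqrt_le_iff.2 ⟨by positivity,
          Finset.sum_sq_le_sq_sum_of_nonneg fun _ _ => norm_nonneg _⟩
    _ ≤ ∑ l, ‖2 * π * I * ξ l‖ := by
        refine Finset.sum_le_sum fun l _ => ?_
        simp only [norm_mul, Complex.norm_real, Complex.norm_I, Complex.norm_ofNat, mul_one]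
        refine le_mul_of_one_le_left (norm_nonneg _) ?_
        rw [Real.norm_of_nonneg Real.pi_nonneg]
        linarith [Real.two_le_pi]

theorem norm_toL2_sub_fourierMultiplier_le (hm : m.HasTemperateGrowth) {R : ℝ} (hR : 0 < R)
    (hm_one : ∀ ξ, ‖ξ‖ ≤ R → m ξ = 1) (hm_mem : ∀ ξ, m ξ ∈ Set.Icc (0 : ℝ) 1)
    (v : 𝓢(Ed d, ℂ)) :
    ‖toL2 (v - 𝓕⁻ (mulCLM m (𝓕 v)))‖ ≤ R⁻¹ * ∑ l, ‖toL2 (pdCLM l v)‖ := by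
  have hplancherel : ∀ u : 𝓢(Ed d, ℂ), ‖toL2 (𝓕 u)‖ = ‖toL2 u‖ := SchwartzMap.norm_fourier_toL2_eq
  simp only [← hplancherel (pdCLM _ v), ← hplancherel (v - _)]
  refine Lp_norm_le_mul_sum_norm Finset.univ (by positivity) _ _ ?_
  have hpd : ∀ᵐ ξ, ∀ l, toL2 (𝓕 (pdCLM l v)) ξ = 𝓕 (pdCLM l v) ξ :=
    ae_all_iff.2 fun l => toL2_ae _
  filter_upwards [toL2_ae (𝓕 (v - 𝓕⁻ (mulCLM m (𝓕 v)))), hpd] with ξ hξ hpdξ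
  have hdiff : 𝓕 (v - 𝓕⁻ (mulCLM m (𝓕 v))) ξ = (1 - m ξ : ℝ) * 𝓕 v ξ := by
    rw [sub_eq_add_neg, FourierTransform.fourier_add, FourierTransform.fourier_neg,
      FourierTransform.fourier_fourierInv_eq, add_apply, neg_apply, mulCLM_apply hm]
    push_cast
    ring
  have hsymbol : ‖((1 - m ξ : ℝ) : ℂ)‖ ≤ R⁻¹ * ‖ξ‖ := by
    rw [Complex.norm_real, Real.norm_of_nonneg (sub_nonneg.2 (hm_mem ξ).2)]
    rcases le_or_gt ‖ξ‖ R with h | h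
    · rw [hm_one ξ h, sub_self]
      positivity
    · rw [inv_mul_eq_div]
      linarith [(one_le_div hR).2 h.le, (hm_mem ξ).1]
  simp only [hξ, hpdξ, hdiff, fourier_pdCLM, norm_mul _ (𝓕 v ξ), ← Finset.sum_mul]
  rw [← mul_assoc]
  gcongr
  exact hsymbol.trans (by gcongr; exact norm_le_sum_norm_fourier_pdCLM_symbol ξ)

theorem exists_compact_norm_sub_le (hχ : Continuous χ) (hχc : HasCompactSupport χ)
    {X : L2 d →L[ℂ] L2 d} (hX : ∀ f, X f =ᵐ[volume] fun x => χ x * f x) {R : ℝ} (hR : 0 < R) :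
    ∃ A : L2 d →L[ℂ] L2 d, IsCompactOperator A ∧ ∀ v : 𝓢(Ed d, ℂ),
      ‖(X - A) (toL2 v)‖ ≤ ‖X‖ * (R⁻¹ * ∑ l, ‖toL2 (pdCLM l v)‖) := by
  let m : ContDiffBump (0 : Ed d) := ⟨R, R + 1, hR, lt_add_one R⟩
  obtain ⟨A, hAc, hA⟩ := exists_compact_mul_fourierMultiplier hχ hχc m.contDiff m.hasCompactSupport
  refine ⟨A, hAc, fun v => ?_⟩
  have hAX : A (toL2 v) = X (toL2 (𝓕⁻ (mulCLM m (𝓕 v)))) := by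
    refine Lp.ext ((hA v).trans ?_)
    filter_upwards [hX (toL2 (𝓕⁻ (mulCLM m (𝓕 v)))), toL2_ae (𝓕⁻ (mulCLM m (𝓕 v)))] with x hx hv
    rw [hx, hv]
  rw [sub_apply, hAX, ← map_sub, ← map_sub]
  refine (X.le_opNorm _).trans (mul_le_mul_of_nonneg_left ?_ (norm_nonneg X))
  exact norm_toL2_sub_fourierMultiplier_le (m.hasCompactSupport.hasTemperateGrowth m.contDiff) hR
    (fun ξ hξ => m.one_of_mem_closedBall (mem_closedBall_zero_iff.2 hξ))
    (fun ξ => ⟨m.nonneg, m.le_one⟩) v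

end FrequencyCutoff

section HeatSymbol

theorem exp_neg_mul_sub_exp_neg_mul_le {x s t : ℝ} (hx : 0 ≤ x) (hs : 0 < s) :
    Real.exp (-(s * x)) - Real.exp (-(t * x)) ≤ s⁻¹ * |s - t| := by
  have hdiff : 1 - Real.exp (-((t - s) * x)) ≤ |s - t| * x := by
    have hexp := Real.one_sub_le_exp_neg ((t - s) * x)
    have habs : (t - s) * x ≤ |s - t| * x := by
      gcongr
      rw [abs_sub_comm]
      exact le_abs_self _
    linarith
  have hdecay : Real.exp (-(s * x)) * x ≤ s⁻¹ := by
    rw [Real.exp_neg, inv_mul_le_iff₀ (Real.exp_pos _), ← div_eq_mul_inv, le_div_iff₀ hs]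
    linarith [Real.add_one_le_exp (s * x)]
  calc Real.exp (-(s * x)) - Real.exp (-(t * x))
      = Real.exp (-(s * x)) * (1 - Real.exp (-((t - s) * x))) := by
        rw [mul_sub, mul_one, ← Real.exp_add]
        ring_nf
    _ ≤ Real.exp (-(s * x)) * (|s - t| * x) := by gcongr
    _ = Real.exp (-(s * x)) * x * |s - t| := by ring
    _ ≤ s⁻¹ * |s - t| := by gcongr

theorem abs_exp_neg_mul_sub_exp_neg_mul_le {a x s t : ℝ} (ha : 0 < a) (hx : 0 ≤ x) (hs : a ≤ s)
    (ht : a ≤ t) : |Real.exp (-(s * x)) - Real.exp (-(t * x))| ≤ a⁻¹ * |s - t| := by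
  refine abs_sub_le_iff.2 ⟨?_, ?_⟩
  · refine (exp_neg_mul_sub_exp_neg_mul_le hx (ha.trans_le hs)).trans ?_
    gcongr
  · refine (exp_neg_mul_sub_exp_neg_mul_le hx (ha.trans_le ht)).trans ?_
    rw [abs_sub_comm]
    gcongr

/-- The symbol `λ ↦ e^{-tλ}` of the heat semigroup `e^{-tP}`. Both `t` and `λ` are replaced by
their positive parts, so that the function is bounded for every real `t`. -/
def heatSymbol (t : ℝ) : ℝ →ᵇ ℂ :=
  BoundedContinuousFunction.ofNormedAddCommGroup
    (fun x => (Real.exp (-(max t 0 * max x 0)) : ℂ)) (by fun_prop) 1 fun x => by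
      rw [Complex.norm_real, Real.norm_of_nonneg (Real.exp_pos _).le, Real.exp_le_one_iff,
        neg_nonpos]
      positivity

theorem heatSymbol_apply {t : ℝ} (ht : 0 ≤ t) (x : ℝ) :
    heatSymbol t x = (Real.exp (-(t * max x 0)) : ℂ) := by
  conv_rhs => rw [← max_eq_left ht]
  rfl

theorem continuousOn_heatSymbol : ContinuousOn heatSymbol (Set.Ioi 0) := by
  refine continuousOn_of_forall_continuousAt fun t (ht : 0 < t) => ?_
  have hlipschitz : LipschitzOnWith (t / 2)⁻¹.toNNReal heatSymbol (Set.Ici (t / 2)) := by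
    refine LipschitzOnWith.of_dist_le_mul fun s hs r hr => ?_
    rw [Real.coe_toNNReal _ (by positivity), Real.dist_eq]
    refine (BoundedContinuousFunction.dist_le (by positivity)).2 fun x => ?_
    rw [heatSymbol_apply ((half_pos ht).le.trans hs), heatSymbol_apply ((half_pos ht).le.trans hr),
      Complex.dist_eq, ← ofReal_sub, Complex.norm_real]
    exact abs_exp_neg_mul_sub_exp_neg_mul_le (half_pos ht) (le_max_right _ _) hs hr
  exact hlipschitz.continuousOn.continuousAt (Ici_mem_nhds (half_lt_self ht))

theorem nonneg_of_mem_Icc_inv_natCast {n : ℕ} {t : ℝ} (ht : t ∈ Set.Icc (n : ℝ)⁻¹ n) : 0 ≤ t :=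
  (inv_nonneg.2 n.cast_nonneg).trans ht.1

theorem Icc_inv_natCast_subset_Ioi {n : ℕ} (hn : 0 < n) :
    Set.Icc (n : ℝ)⁻¹ n ⊆ Set.Ioi 0 :=
  fun _ ht => (inv_pos.2 (Nat.cast_pos.2 hn)).trans_le ht.1

theorem integrableOn_heatSymbol (n : ℕ) :
    IntegrableOn (fun t : ℝ => (√t)⁻¹ • heatSymbol t) (Set.Icc (n : ℝ)⁻¹ n) := by
  rcases n.eq_zero_or_pos with rfl | hn
  · simp
  · have hpos := Icc_inv_natCast_subset_Ioi hn
    have hinv : ContinuousOn (fun t : ℝ => (√t)⁻¹) (Set.Icc (n : ℝ)⁻¹ n) :=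
      Real.continuous_sqrt.continuousOn.inv₀ fun t ht => (Real.sqrt_pos.2 (hpos ht)).ne'
    exact (hinv.smul (continuousOn_heatSymbol.mono hpos)).integrableOn_compact isCompact_Icc

/-- The symbol `λ ↦ ∫_{1/n}^n e^{-tλ} dt/√t`, which converges to `√π λ^{-1/2}`. -/
def truncatedInvSqrt (n : ℕ) : ℝ →ᵇ ℂ :=
  ∫ t in Set.Icc (n : ℝ)⁻¹ n, (√t)⁻¹ • heatSymbol t

theorem truncatedInvSqrt_apply (n : ℕ) (x : ℝ) :
    truncatedInvSqrt n x =
      ((∫ t in Set.Icc (n : ℝ)⁻¹ n, (√t)⁻¹ * Real.exp (-(t * max x 0)) : ℝ) : ℂ) := by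
  have heval := (BoundedContinuousFunction.evalCLM ℂ x).integral_comp_comm
    (integrableOn_heatSymbol n)
  refine heval.symm.trans ?_
  rw [← integral_complex_ofReal]
  refine setIntegral_congr_fun measurableSet_Icc fun t ht => ?_
  simp only [BoundedContinuousFunction.evalCLM_apply, BoundedContinuousFunction.coe_smul,
    heatSymbol_apply (nonneg_of_mem_Icc_inv_natCast ht), Complex.real_smul, ofReal_mul]

theorem setIntegral_inv_sqrt_mul_exp_le {y : ℝ} (hy : 0 < y) (n : ℕ) :
    ∫ t in Set.Icc (n : ℝ)⁻¹ n, (√t)⁻¹ * Real.exp (-(t * y)) ≤ √(π / y) := by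
  have hgamma : ∫ t in Set.Ioi (0 : ℝ), t ^ ((1 : ℝ) / 2 - 1) * Real.exp (-(y * t)) = √(π / y) := by
    rw [Real.integral_rpow_mul_exp_neg_mul_Ioi (by norm_num) hy, Real.Gamma_one_half_eq,
      ← Real.sqrt_eq_rpow, ← Real.sqrt_mul (by positivity)]
    ring_nf
  have hintegrable : IntegrableOn (fun t : ℝ => t ^ ((1 : ℝ) / 2 - 1) * Real.exp (-(y * t)))
      (Set.Ioi 0) :=
    not_imp_comm.1 integral_undef (by rw [hgamma]; positivity)
  rcases n.eq_zero_or_pos with rfl | hn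
  · simp
  calc ∫ t in Set.Icc (n : ℝ)⁻¹ n, (√t)⁻¹ * Real.exp (-(t * y))
      = ∫ t in Set.Icc (n : ℝ)⁻¹ n, t ^ ((1 : ℝ) / 2 - 1) * Real.exp (-(y * t)) := by
        refine setIntegral_congr_fun measurableSet_Icc fun t ht => ?_
        have hexponent : (1 : ℝ) / 2 - 1 = -(1 / 2) := by norm_num
        simp only [hexponent, Real.rpow_neg (nonneg_of_mem_Icc_inv_natCast ht), ← Real.sqrt_eq_rpow,
          mul_comm]
    _ ≤ ∫ t in Set.Ioi (0 : ℝ), t ^ ((1 : ℝ) / 2 - 1) * Real.exp (-(y * t)) := by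
        refine setIntegral_mono_set hintegrable ?_ (Icc_inv_natCast_subset_Ioi hn).eventuallyLE
        filter_upwards [ae_restrict_mem measurableSet_Ioi] with t (ht : 0 < t)
        simp only [Pi.zero_apply]
        positivity
    _ = √(π / y) := hgamma

theorem mul_norm_truncatedInvSqrt_sq_le (n : ℕ) {x : ℝ} (hx : 0 ≤ x) :
    x * ‖truncatedInvSqrt n x‖ ^ 2 ≤ π := by
  rcases hx.eq_or_lt with rfl | hx
  · simpa using Real.pi_pos.le
  have hnonneg : 0 ≤ ∫ t in Set.Icc (n : ℝ)⁻¹ n, (√t)⁻¹ * Real.exp (-(t * x)) :=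
    integral_nonneg fun t => by positivity
  rw [truncatedInvSqrt_apply, Complex.norm_real, max_eq_left hx.le, Real.norm_of_nonneg hnonneg]
  calc _ ≤ x * √(π / x) ^ 2 := by
        gcongr
        exact setIntegral_inv_sqrt_mul_exp_le hx n
    _ = π := by
        rw [Real.sq_sqrt (by positivity)]
        field_simp

end HeatSymbol

theorem goodSymbol_boundedContinuous (g : ℝ →ᵇ ℂ) : GoodSymbol g :=
  ⟨g.continuous, ‖g‖, fun x _ => g.norm_coe_le_norm x⟩

namespace SpectralCalc

variable {d : ℕ} {G : Ed d → Fin d → Fin d → ℝ} (S : SpectralCalc d G)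

/-- The functional calculus evaluated at a vector, `g ↦ g(P) f`, as a continuous linear map on
bounded continuous functions, so that it commutes with Bochner integrals of symbols. -/
def applyCLM (f : L2 d) : (ℝ →ᵇ ℂ) →L[ℂ] L2 d :=
  LinearMap.mkContinuous
    { toFun := fun g => S.map g f
      map_add' := fun g h => S.map_add_apply (goodSymbol_boundedContinuous g)
        (goodSymbol_boundedContinuous h) f
      map_smul' := fun c g => congrArg (· f) (S.map_smul c g (goodSymbol_boundedContinuous g)) }
    ‖f‖ fun g => (S.norm_map_apply_le (fun x _ => g.norm_coe_le_norm x) f).trans_eq (mul_comm _ _)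

theorem map_truncatedInvSqrt (n : ℕ) (f : L2 d) :
    S.map (truncatedInvSqrt n) f = ∫ t in Set.Icc (n : ℝ)⁻¹ n,
      (√t)⁻¹ • S.map (fun x => Complex.exp (-(t : ℂ) * ((max x 0 : ℝ) : ℂ))) f := by
  refine ((S.applyCLM f).integral_comp_comm (integrableOn_heatSymbol n)).symm.trans ?_
  refine setIntegral_congr_fun measurableSet_Icc fun t ht => ?_
  have hheat : ⇑(heatSymbol t) = fun x : ℝ => Complex.exp (-(t : ℂ) * ((max x 0 : ℝ) : ℂ)) := by
    ext x
    rw [heatSymbol_apply (nonneg_of_mem_Icc_inv_natCast ht)]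
    push_cast
    rw [neg_mul]
  rw [← hheat]
  exact (S.applyCLM f).map_smul_of_tower _ _

theorem exists_map_resolventSymbol_eq_map_map {φ ψ : ℝ → ℂ} (hφ : Continuous φ) {b : ℝ}
    (hφb : ∀ x, 0 ≤ x → (1 + x) * ‖φ x‖ ≤ b) (hψ : GoodSymbol ψ) {C : ℝ}
    (hψC : ∀ x, 0 ≤ x → x * ‖ψ x‖ ^ 2 ≤ C) (f : L2 d) :
    ∃ h, S.map resolventSymbol h = S.map ψ (S.map φ f) ∧
      ‖h - S.map resolventSymbol h‖ ≤ √C * b * ‖f‖ ∧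
      √(inner ℂ (S.map resolventSymbol h) (h - S.map resolventSymbol h)).re ≤ √C * b * ‖f‖ := by
  have hC : 0 ≤ C := by simpa using hψC 0 le_rfl
  have hb : 0 ≤ b := le_trans (by positivity) (hφb 0 le_rfl)
  have hle : ∀ x, 0 ≤ x → ‖φ x‖ ≤ b ∧ x * ‖φ x‖ ≤ b := fun x hx => by
    have := hφb x hx
    have := norm_nonneg (φ x)
    have := mul_nonneg hx this
    constructor <;> linarith
  have hnorm : ∀ x : ℝ, 0 ≤ x → ∀ z : ℂ, ‖((max x 0 : ℝ) : ℂ) * z‖ = x * ‖z‖ := fun x hx z => by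
    rw [max_eq_left hx, norm_mul, Complex.norm_real, Real.norm_of_nonneg hx]
  have hφgood : GoodSymbol φ := ⟨hφ, b, fun x hx => (hle x hx).1⟩
  have hxφ : GoodSymbol fun x => (max x 0 : ℝ) * φ x :=
    ⟨by fun_prop, b, fun x hx => (hnorm x hx _).trans_le (hle x hx).2⟩
  have hxψφ : GoodSymbol fun x => (max x 0 : ℝ) * (ψ x * φ x) := by
    simpa only [mul_left_comm] using hψ.mul hxφ
  obtain ⟨h, hKh, hdiff⟩ := S.exists_map_resolventSymbol_eq (hψ.mul hφgood) hxψφ f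
  refine ⟨h, hKh.trans (S.map_mul_apply hψ hφgood f), ?_, ?_⟩
  · rw [hdiff]
    refine S.norm_map_apply_le (fun x hx => ?_) f
    rw [hnorm x hx, norm_mul]
    refine le_of_sq_le_sq ?_ (by positivity)
    calc (x * (‖ψ x‖ * ‖φ x‖)) ^ 2 = x * ‖ψ x‖ ^ 2 * (‖φ x‖ * (x * ‖φ x‖)) := by ring
      _ ≤ C * (b * b) := by
        gcongr
        exacts [hψC x hx, (hle x hx).1, (hle x hx).2]
      _ = (√C * b) ^ 2 := by rw [mul_pow, Real.sq_sqrt hC, sq b]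
  · rw [hdiff, hKh]
    refine Real.sqrt_le_iff.2 ⟨by positivity, ?_⟩
    rw [mul_pow, mul_pow, Real.sq_sqrt hC]
    refine S.re_inner_map_map_le (hψ.mul hφgood) hxψφ (fun x hx => ?_) f
    rw [hnorm x hx, norm_mul]
    calc ‖ψ x‖ * ‖φ x‖ * (x * (‖ψ x‖ * ‖φ x‖)) = x * ‖ψ x‖ ^ 2 * ‖φ x‖ ^ 2 := by ring
      _ ≤ C * b ^ 2 := by
        gcongr
        exacts [hψC x hx, (hle x hx).1]

end SpectralCalc

section Compactness

variable {d : ℕ} {G : Ed d → Fin d → Fin d → ℝ} {lam M : ℝ}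

theorem EllipticCoeff.norm_pdResolvent_le (hG : EllipticCoeff G lam M) (S : SpectralCalc d G)
    (j : Fin d) {B : L2 d →L[ℂ] L2 d} {ε : ℝ} (hε : 0 ≤ ε)
    (hB : ∀ v : 𝓢(Ed d, ℂ), ‖B (toL2 v)‖ ≤ ε * ∑ l, ‖toL2 (pdCLM l v)‖) (h : L2 d) :
    ‖B (pdResolvent G j h)‖ ≤ ε * (d / lam * (1 + M * √(d / lam)) *
      (‖h - S.map resolventSymbol h‖ +
        √(inner ℂ (S.map resolventSymbol h) (h - S.map resolventSymbol h)).re)) := by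
  refine hG.denseRange_oneAddDivGrad.induction_on h
    (isClosed_le (by fun_prop) (by fun_prop)) fun u => ?_
  rw [S.map_resolventSymbol_oneAddDivGrad hG.temperate, pdResolvent_oneAddDivGrad hG,
    oneAddDivGrad_apply, add_sub_cancel_left]
  exact (hB (pdCLM j u)).trans
    (mul_le_mul_of_nonneg_left (hG.sum_norm_pd_pd_le_graph j u) hε)

theorem EllipticCoeff.norm_riesz_map_le (hG : EllipticCoeff G lam M) (S : SpectralCalc d G)
    {j : Fin d} {Rj : L2 d →L[ℂ] L2 d} (hRj : RieszOf d G S j Rj) {φ : ℝ → ℂ}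
    (hφ : Continuous φ) {b : ℝ} (hb : ∀ x, 0 ≤ x → (1 + x) * ‖φ x‖ ≤ b)
    {B : L2 d →L[ℂ] L2 d} {ε : ℝ} (hε : 0 ≤ ε)
    (hB : ∀ v : 𝓢(Ed d, ℂ), ‖B (toL2 v)‖ ≤ ε * ∑ l, ‖toL2 (pdCLM l v)‖) (f : L2 d) :
    ‖B (Rj (S.map φ f))‖ ≤ ε * (d / lam * (1 + M * √(d / lam)) * (2 * b * ‖f‖)) := by
  have hlam := hG.pos
  have hM := hG.bound_nonneg j
  choose h hKh hdiff henergy using fun n : ℕ =>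
    S.exists_map_resolventSymbol_eq_map_map hφ hb
      (goodSymbol_boundedContinuous (truncatedInvSqrt n))
      (fun _ hx => mul_norm_truncatedInvSqrt_sq_le n hx) f
  have hlim := hRj (S.map φ f) (fun n => S.map resolventSymbol (h n))
    (fun n => pdResolvent G j (h n)) (fun n => (hKh n).trans (S.map_truncatedInvSqrt n _))
    (fun n u => integral_pdResolvent_mul hG S j (h n) u)
  refine le_of_tendsto ((B.continuous.tendsto _).comp hlim).norm (Eventually.of_forall fun n => ?_)
  have hπ : 0 < √π := Real.sqrt_pos.2 Real.pi_pos
  rw [Function.comp_apply, B.map_smul_of_tower, norm_smul, norm_inv, Real.norm_of_nonneg hπ.le,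
    inv_mul_le_iff₀ hπ]
  calc ‖B (pdResolvent G j (h n))‖
      ≤ ε * (d / lam * (1 + M * √(d / lam)) * (√π * b * ‖f‖ + √π * b * ‖f‖)) := by
        refine (hG.norm_pdResolvent_le S j hε hB (h n)).trans ?_
        gcongr
        exacts [hdiff n, henergy n]
    _ = √π * (ε * (d / lam * (1 + M * √(d / lam)) * (2 * b * ‖f‖))) := by ring

end Compactness

theorem isCompactOperator_of_forall_norm_sub_le {𝕜 E F : Type*} [NontriviallyNormedField 𝕜]
    [NormedAddCommGroup E] [NormedSpace 𝕜 E] [NormedAddCommGroup F] [NormedSpace 𝕜 F]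
    [CompleteSpace F] {T : E →L[𝕜] F} {C : ℝ}
    (hT : ∀ R : ℝ, 0 < R → ∃ A : E →L[𝕜] F, IsCompactOperator A ∧ ‖T - A‖ ≤ R⁻¹ * C) :
    IsCompactOperator T := by
  choose A hA hTA using fun n : ℕ => hT (n + 1) n.cast_add_one_pos
  refine isCompactOperator_of_tendsto (F := A) (l := atTop) ?_ (Eventually.of_forall hA)
  have hzero : Tendsto (fun n : ℕ => ((n : ℝ) + 1)⁻¹ * C) atTop (𝓝 0) := by
    simpa using (tendsto_one_div_add_atTop_nhds_zero_nat (𝕜 := ℝ)).mul_const C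
  exact tendsto_iff_norm_sub_tendsto_zero.2
    (squeeze_zero (fun _ => norm_nonneg _) (fun n => norm_sub_rev T _ ▸ hTA n) hzero)

theorem statement14_general {d : ℕ} {G : Ed d → Fin d → Fin d → ℝ} {lam M : ℝ}
    (hG : EllipticCoeff G lam M) (S : SpectralCalc d G) {χ : Ed d → ℂ} (hχ : Continuous χ)
    (hχc : HasCompactSupport χ) {φ : ℝ → ℂ} (hφ : Continuous φ) {b : ℝ}
    (hφb : ∀ x, 0 ≤ x → (1 + x) * ‖φ x‖ ≤ b) {j : Fin d} {Rj : L2 d →L[ℂ] L2 d}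
    (hRj : RieszOf d G S j Rj) {T : L2 d → L2 d}
    (hT : ∀ f, T f =ᵐ[volume] fun x => χ x * Rj (S.map φ f) x) :
    IsCompactOperator T := by
  obtain ⟨X, hX⟩ := exists_mul_clm_of_hasCompactSupport (p := 2) (μ := volume) hχ hχc
  have hTX : T = X ∘L Rj ∘L S.map φ := funext fun f => Lp.ext ((hT f).trans (hX _).symm)
  have hlam := hG.pos
  have hM := hG.bound_nonneg j
  have hb : 0 ≤ b := le_trans (by positivity) (hφb 0 le_rfl)
  rw [hTX]
  refine isCompactOperator_of_forall_norm_sub_le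
    (C := ‖X‖ * (d / lam * (1 + M * √(d / lam)) * (2 * b))) fun R hR => ?_
  obtain ⟨A, hA, hXA⟩ := exists_compact_norm_sub_le hχ hχc hX hR
  refine ⟨A ∘L Rj ∘L S.map φ, hA.comp_clm _, ?_⟩
  rw [← ContinuousLinearMap.sub_comp]
  refine ContinuousLinearMap.opNorm_le_bound _ (by positivity) fun f => ?_
  calc ‖(X - A) (Rj (S.map φ f))‖
      ≤ ‖X‖ * R⁻¹ * (d / lam * (1 + M * √(d / lam)) * (2 * b * ‖f‖)) :=
        hG.norm_riesz_map_le S hRj hφ hφb (by positivity)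
          (fun v => (hXA v).trans_eq (mul_assoc _ _ _).symm) f
    _ = R⁻¹ * (‖X‖ * (d / lam * (1 + M * √(d / lam)) * (2 * b))) * ‖f‖ := by ring

/-- **Proposition (local compactness of the Riesz transform).** Let `d ≥ 3` and
`P = -div(G∇)` with `G` symmetric, `C_b^∞`, uniformly elliptic.  For every
`χ ∈ C₀^∞(ℝ^d)`, `φ ∈ C₀^∞(ℝ)` and `j`, the operator `χ(x) R(j) φ(P)` is compact on
`L²(ℝ^d)`, where `R(j) = ∂_j P^{-1/2}` is the `j`-th Riesz transform (the strong
limit of `π^{-1/2} ∂_j ∫_{1/n}^n e^{-tP} dt/√t`). -/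
theorem statement14 (d : ℕ) (hd : 3 ≤ d) (G : Ed d → Fin d → Fin d → ℝ)
    (hG : Standing d G) (S : SpectralCalc d G)
    (χ : Ed d → ℂ) (hχ1 : ContDiff ℝ (⊤ : ℕ∞) χ) (hχ2 : HasCompactSupport χ)
    (φr : ℝ → ℝ) (hφ1 : ContDiff ℝ (⊤ : ℕ∞) φr) (hφ2 : HasCompactSupport φr)
    (j : Fin d) (Rj : L2 d →L[ℂ] L2 d) (hRj : RieszOf d G S j Rj)
    (T : L2 d → L2 d)
    (hT : ∀ f : L2 d,
      (⇑(T f)) =ᵐ[volume] fun x => χ x * (Rj ((S.map fun lam => ((φr lam : ℝ) : ℂ)) f)) x) :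
    IsCompactOperator T := by
  obtain ⟨_, _, hcoeff⟩ := hG.exists_ellipticCoeff
  have hφ : Continuous φr := hφ1.continuous
  have hcont : Continuous fun x => (1 + x) * φr x := by fun_prop
  obtain ⟨b, hb⟩ := hcont.bounded_above_of_compact_support hφ2.mul_left
  refine statement14_general hcoeff S hχ1.continuous hχ2 (by fun_prop)
    (fun x hx => ?_) hRj hT (b := b)
  rw [Complex.norm_real, ← Real.norm_of_nonneg (show 0 ≤ 1 + x by positivity), ← norm_mul]
  exact hb x
end
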